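/- arXiv:2405.02531 — 2 statements merged into one kernel-verified Lean document; each statement's English description precedes it below -/
import Mathlib

section
/- Fix δ ≥ 0, a symbol a of order 0, and the bump β. There exists ε₀ > 0 such that for every ε ∈ (0, ε₀] and every η ∈ C_c^∞(ℝ) supported in [π−2ε, π+2ε] the following holds. With 𝐊^j_{r₁,r₂}(θ₁,θ₂,θ₂′) = 2^{−2j(3/2+δ)} b(2^j,|x−y|) b(2^j,|x−z|) e^{i 2^j(|x−y|−|x−z|)} 1_{[0,π]}(|θ₁−θ₂|) η(θ₁−θ₂) 1_{[0,π]}(|θ₁−θ₂′|) η(θ₁−θ₂′), where b(2^j,r) = β(r)(2^{−j}+r)^{−3/2−δ} a(2^j r), x = r₁(cos θ₁, sin θ₁), y = r₂(cos θ₂, sin θ₂), z = r₂(cos θ₂′, sin θ₂′), and (𝐓^j_{r₁,r₂} F)(θ₁) = ∫₀^{2π} ∫₀^{2π} 𝐊^j_{r₁,r₂}(θ₁,θ₂,θ₂′) F(θ₂,θ₂′) dθ₂ dθ₂′, there is a constant C (independent of j, r₂, F) such that for every F supported in [0,ε]² and every j ≥ 1, r₂ > 0: ( ∫₀^∞ ∫₀^{2π}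 |(𝐓^j_{r₁,r₂} F)(θ₁)|² dθ₁ r₁ dr₁ )^{1/2} ≤ C 2^{−2j(3/2+δ)} (1 + 2^j r₂³)^{−1/2} ‖F‖_{L²([0,2π]²)}. -/
open MeasureTheory Real Set
open scoped ENNReal NNReal

noncomputable section

/-- Distance between planar points with polar coordinates, as a function of
`r₁, r₂` and the angle difference. -/
def dG (r₁ r₂ θ : ℝ) : ℝ := Real.sqrt (r₁ ^ 2 + r₂ ^ 2 - 2 * r₁ * r₂ * Real.cos θ)

/-- A symbol of order `0` on `(0, ∞)`. -/
def IsSymbol0 (a : ℝ → ℂ) : Prop :=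
  ContDiffOn ℝ (⊤ : ℕ∞) a (Set.Ioi 0) ∧ (∃ M : ℝ, ∀ r > (0 : ℝ), ‖a r‖ ≤ M) ∧
    ∀ N : ℕ, ∃ C : ℝ, ∀ r > (0 : ℝ),
      ‖iteratedDerivWithin N a (Set.Ioi 0) r‖ ≤ C * r ^ (-(N : ℝ))

/-- `b(2^j, r) = β(r) (2^{-j} + r)^{-3/2-δ} a(2^j r)`. -/
def bfun (δ : ℝ) (a : ℝ → ℂ) (β : ℝ → ℝ) (j : ℕ) (r : ℝ) : ℂ :=
  ((β r : ℝ) : ℂ) * ((((2 : ℝ) ^ (-(j : ℝ)) + r) ^ (-(3 / 2 + δ)) : ℝ) : ℂ) *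
    a ((2 : ℝ) ^ (j : ℝ) * r)

/-- The bilinear kernel `𝐊^j_{r₁,r₂}(θ₁, θ₂, θ₂′)`. -/
def BK (δ : ℝ) (a : ℝ → ℂ) (β η : ℝ → ℝ) (j : ℕ) (r₁ r₂ θ₁ θ₂ θ₂' : ℝ) : ℂ :=
  (((2 : ℝ) ^ (-(2 * (j : ℝ)) * (3 / 2 + δ)) : ℝ) : ℂ) *
    bfun δ a β j (dG r₁ r₂ (θ₁ - θ₂)) * bfun δ a β j (dG r₁ r₂ (θ₁ - θ₂')) *
    Complex.exp (Complex.I * (((2 : ℝ) ^ (j : ℝ) *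
        (dG r₁ r₂ (θ₁ - θ₂) - dG r₁ r₂ (θ₁ - θ₂')) : ℝ) : ℂ)) *
    Set.indicator (Set.Icc (0 : ℝ) Real.pi) (fun _ => (1 : ℂ)) |θ₁ - θ₂| *
    ((η (θ₁ - θ₂) : ℝ) : ℂ) *
    Set.indicator (Set.Icc (0 : ℝ) Real.pi) (fun _ => (1 : ℂ)) |θ₁ - θ₂'| *
    ((η (θ₁ - θ₂') : ℝ) : ℂ)

/-- The bilinear operator `𝐓^j_{r₁,r₂}`. -/
def BT (δ : ℝ) (a : ℝ → ℂ) (β η : ℝ → ℝ) (j : ℕ) (r₁ r₂ : ℝ)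
    (F : ℝ → ℝ → ℂ) (θ₁ : ℝ) : ℂ :=
  ∫ θ₂ in Set.Icc (0 : ℝ) (2 * Real.pi),
    ∫ θ₂' in Set.Icc (0 : ℝ) (2 * Real.pi),
      BK δ a β η j r₁ r₂ θ₁ θ₂ θ₂' * F θ₂ θ₂'


open scoped FourierTransform in
lemma parseval_aux {a b : ℝ} (hab : a < b) (g : ℝ → ℂ)
    (hg : MemLp g 2 (volume.restrict (Ioc a b))) (hs : ∀ x, x ∉ Ioc a b → g x = 0) :
    HasSum (fun n : ℤ => ‖(b - a)⁻¹ • 𝓕 g ((n : ℝ) / (b - a))‖ ^ 2)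
      ((b - a)⁻¹ * ∫ x in Ioc a b, ‖g x‖ ^ 2) := by
  have h := hasSum_sq_fourierCoeffOn hab hg
  rw [intervalIntegral.integral_of_le hab.le, smul_eq_mul] at h
  convert h using 4 with n
  rw [fourierCoeffOn_eq_integral, one_div, intervalIntegral.integral_of_le hab.le,
    Real.fourier_real_eq_integral_exp_smul]
  congr 1
  rw [← setIntegral_eq_integral_of_forall_compl_eq_zero (s := Ioc a b)]
  · apply integral_congr_ae
    filter_upwards with x
    rw [fourier_coe_apply]
    congr 2
    push_cast
    ring
  · intro x hx
    simp [hs x hx]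

open scoped FourierTransform in
open scoped Convolution in
lemma conv_L2 (κ f : ℝ → ℂ) (M B : ℝ) (hκm : Measurable κ) (hκb : ∀ x, ‖κ x‖ ≤ M)
    (hκs : ∀ x, x ∉ Icc 0 (2 * π) → κ x = 0)
    (hκF : ∀ ξ, ‖𝓕 κ ξ‖ ≤ B)
    (hf2 : MemLp f 2 volume)
    (hfs : ∀ x, x ∉ Icc 0 (2 * π) → f x = 0) :
    ∫⁻ θ, ‖∫ y, κ (θ - y) * f y‖ₑ ^ (2 : ℝ) ≤ ENNReal.ofReal (B ^ 2) * ∫⁻ y, ‖f y‖ₑ ^ (2:ℝ) := by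
  have hpi := Real.pi_pos
  set a : ℝ := -1
  set b : ℝ := 4 * π + 1
  have hab : a < b := by simp only [a, b]; linarith
  have hfi : Integrable f := by
    rw [← integrableOn_iff_integrable_of_support_subset (s := Icc 0 (2 * π))]
    · have : IsFiniteMeasure (volume.restrict (Icc (0 : ℝ) (2 * π))) := by
        constructor; rw [Measure.restrict_apply_univ]; exact measure_Icc_lt_top
      exact (hf2.restrict _).integrable (by norm_num)
    · intro x hx; by_contra h; exact hx (hfs x h)
  have hκi : Integrable κ := by
    rw [← integrableOn_iff_integrable_of_support_subset (s := Icc 0 (2 * π))]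
    · exact Measure.integrableOn_of_bounded (M := M) measure_Icc_lt_top.ne hκm.aestronglyMeasurable
        (Filter.Eventually.of_forall hκb)
    · intro x hx; by_contra h; exact hx (hκs x h)
  set g : ℝ → ℂ := f ⋆[ContinuousLinearMap.mul ℂ ℂ] κ with hgdef
  have hgeq : ∀ θ, g θ = ∫ y, κ (θ - y) * f y := by
    intro θ
    simp only [hgdef, convolution_def, ContinuousLinearMap.mul_apply']
    congr 1; ext y; ring
  have hgF : ∀ ξ, 𝓕 g ξ = 𝓕 f ξ * 𝓕 κ ξ := fun ξ => Real.fourier_mul_convolution_eq hfi hκi ξ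
  have hgs : ∀ x, x ∉ Ioc a b → g x = 0 := by
    intro x hx
    rw [hgeq]
    apply integral_eq_zero_of_ae
    filter_upwards with y
    by_cases hy : y ∈ Icc 0 (2 * π)
    · rw [hκs, zero_mul]; rfl
      intro h
      apply hx
      simp only [a, b, mem_Ioc, mem_Icc] at *
      constructor <;> linarith
    · simp [hfs y hy]
  have hgi : Integrable g := hfi.integrable_convolution _ hκi
  have hg2 : MemLp g 2 (volume.restrict (Ioc a b)) := by
    have : IsFiniteMeasure (volume.restrict (Ioc a b)) := by
        constructor; simp
    apply MemLp.of_bound (C := ∫ y, M * ‖f y‖) hgi.aestronglyMeasurable.restrict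
    filter_upwards with θ
    rw [hgeq]
    apply norm_integral_le_of_norm_le (hfi.norm.const_mul _)
    filter_upwards with y
    rw [norm_mul]
    gcongr; exact hκb _
  have P1 := parseval_aux hab g hg2 hgs
  have P2 := parseval_aux hab f (hf2.restrict _) (by
    intro x hx; apply hfs; intro h; apply hx
    simp only [a, b, mem_Ioc, mem_Icc] at *
    constructor <;> linarith)
  have key : ∫ x in Ioc a b, ‖g x‖ ^ 2 ≤ B ^ 2 * ∫ x in Ioc a b, ‖f x‖ ^ 2 := by
    have := hasSum_le (g := fun n : ℤ => B ^ 2 * ‖(b - a)⁻¹ • 𝓕 f ((n : ℝ) / (b - a))‖ ^ 2) (fun n => ?_) P1 (P2.mul_left (B ^ 2))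
    · have hba : 0 < (b - a)⁻¹ := by simpa using hab
      have h3 : (b - a)⁻¹ * ∫ x in Ioc a b, ‖g x‖ ^ 2 ≤ (b - a)⁻¹ * (B ^ 2 * ∫ x in Ioc a b, ‖f x‖ ^ 2) := by
        linarith
      exact le_of_mul_le_mul_left h3 hba
    · rw [hgF, norm_smul, norm_smul, norm_mul]
      have := hκF ((n : ℝ) / (b - a))
      calc (‖(b - a)⁻¹‖ * (‖𝓕 f ((n : ℝ) / (b - a))‖ * ‖𝓕 κ ((n : ℝ) / (b - a))‖)) ^ 2
          ≤ (‖(b - a)⁻¹‖ * (‖𝓕 f ((n : ℝ) / (b - a))‖ * B)) ^ 2 := by gcongr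
        _ = _ := by ring
  have conv : ∀ u : ℝ → ℂ, MemLp u 2 (volume.restrict (Ioc a b)) → (∀ x, x ∉ Ioc a b → u x = 0) →
      ∫⁻ x, ‖u x‖ₑ ^ (2 : ℝ) = ENNReal.ofReal (∫ x in Ioc a b, ‖u x‖ ^ 2) := by
    intro u hu hus
    rw [ofReal_integral_eq_lintegral_ofReal]
    · rw [← setLIntegral_eq_of_support_subset (s := Ioc a b)]
      · apply lintegral_congr
        intro x
        rw [ENNReal.ofReal_pow (norm_nonneg _), ofReal_norm]
        norm_cast
      · intro x hx; by_contra h; apply hx; simp [hus x h]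
    · exact (memLp_two_iff_integrable_sq_norm hu.1).1 hu
    · filter_upwards with x; positivity
  simp_rw [← hgeq]
  rw [conv g hg2 hgs, conv f (hf2.restrict _), ← ENNReal.ofReal_mul (by positivity)]
  · exact ENNReal.ofReal_le_ofReal key
  · intro x hx; apply hfs; intro h; apply hx
    simp only [a, b, mem_Ioc, mem_Icc] at *
    constructor <;> linarith


lemma vdc (Φ Φ1 Φ2 : ℝ → ℝ) (A A1 : ℝ → ℂ) (a b μ M0 M1 : ℝ) (hab : a ≤ b) (hμ : 0 < μ)
    (hM0 : 0 ≤ M0)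
    (hΦ : ∀ x ∈ Icc a b, HasDerivAt Φ (Φ1 x) x)
    (hΦ1 : ∀ x ∈ Icc a b, HasDerivAt Φ1 (Φ2 x) x)
    (hΦ2 : ContinuousOn Φ2 (Icc a b))
    (hA : ∀ x ∈ Icc a b, HasDerivAt A (A1 x) x)
    (hA1 : ContinuousOn A1 (Icc a b))
    (hlow : ∀ x ∈ Icc a b, μ ≤ Φ2 x)
    (hAb : ∀ x ∈ Icc a b, ‖A x‖ ≤ M0) (hA1b : ∀ x ∈ Icc a b, ‖A1 x‖ ≤ M1) :
    ‖∫ x in a..b, Complex.exp (Complex.I * (Φ x : ℂ)) * A x‖ ≤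
      8 * (M0 + M1 * (b - a)) / √μ := by
  set ν := √μ with hν
  have hν0 : 0 < ν := Real.sqrt_pos.2 hμ
  have hν2 : ν ^ 2 = μ := Real.sq_sqrt hμ.le
  set R : ℝ → ℝ := fun x => Φ1 x ^ 2 + μ with hR
  have hRpos : ∀ x, 0 < R x := fun x => by positivity
  -- `w` real part multiplier
  set w : ℝ → ℝ := fun x => Φ1 x / R x with hw
  set w1 : ℝ → ℝ := fun x => (Φ2 x * R x - Φ1 x * (2 * Φ1 x * Φ2 x)) / R x ^ 2 with hw1
  have hwd : ∀ x ∈ Icc a b, HasDerivAt w (w1 x) x := by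
    intro x hx
    have h1 : HasDerivAt R (2 * Φ1 x * Φ2 x) x := by
      have := ((hΦ1 x hx).pow 2).add_const μ
      refine this.congr_deriv ?_
      push_cast; ring
    exact (hΦ1 x hx).div h1 (hRpos x).ne'
  set E : ℝ → ℂ := fun x => Complex.exp (Complex.I * (Φ x : ℂ)) with hE
  have hEn : ∀ x, ‖E x‖ = 1 := by
    intro x; simp only [hE]; rw [mul_comm]; exact Complex.norm_exp_ofReal_mul_I _
  have hEd : ∀ x ∈ Icc a b, HasDerivAt E (E x * (Complex.I * (Φ1 x : ℂ))) x := by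
    intro x hx
    exact (((hΦ x hx).ofReal_comp).const_mul Complex.I).cexp
  set G : ℝ → ℂ := fun x => E x * A x * (-Complex.I * (w x : ℂ)) with hG
  set G1 : ℝ → ℂ := fun x => (E x * (Complex.I * (Φ1 x : ℂ)) * A x + E x * A1 x) *
    (-Complex.I * (w x : ℂ)) + E x * A x * (-Complex.I * (w1 x : ℂ)) with hG1
  have hGd : ∀ x ∈ Icc a b, HasDerivAt G (G1 x) x := by
    intro x hx
    exact ((hEd x hx).mul (hA x hx)).mul (((hwd x hx).ofReal_comp).const_mul (-Complex.I))
  have cΦ : ContinuousOn Φ (Icc a b) := fun x hx => (hΦ x hx).continuousAt.continuousWithinAt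
  have cΦ1 : ContinuousOn Φ1 (Icc a b) := fun x hx => (hΦ1 x hx).continuousAt.continuousWithinAt
  have cA : ContinuousOn A (Icc a b) := fun x hx => (hA x hx).continuousAt.continuousWithinAt
  have cE : ContinuousOn E (Icc a b) := fun x hx => (hEd x hx).continuousAt.continuousWithinAt
  have cw : ContinuousOn w (Icc a b) := fun x hx => (hwd x hx).continuousAt.continuousWithinAt
  have cR : ContinuousOn R (Icc a b) := (cΦ1.pow 2).add continuousOn_const
  have cw1 : ContinuousOn w1 (Icc a b) :=
    ((hΦ2.mul cR).sub (cΦ1.mul ((continuousOn_const.mul cΦ1).mul hΦ2))).div (cR.pow 2)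
      (fun x _ => (pow_pos (hRpos x) 2).ne')
  have cof : ∀ {u : ℝ → ℝ}, ContinuousOn u (Icc a b) →
      ContinuousOn (fun x => ((u x : ℝ) : ℂ)) (Icc a b) :=
    fun h => Complex.continuous_ofReal.comp_continuousOn h
  have cG1 : ContinuousOn G1 (Icc a b) :=
    ((((cE.mul (continuousOn_const.mul (cof cΦ1))).mul cA).add (cE.mul hA1)).mul
      (continuousOn_const.mul (cof cw))).add ((cE.mul cA).mul (continuousOn_const.mul (cof cw1)))
  have iG1 : IntervalIntegrable G1 volume a b := cG1.intervalIntegrable_of_Icc hab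
  have iEA : IntervalIntegrable (fun x => E x * A x) volume a b :=
    (cE.mul cA).intervalIntegrable_of_Icc hab
  have hFT : ∫ x in a..b, G1 x = G b - G a :=
    intervalIntegral.integral_eq_sub_of_hasDerivAt (fun x hx => hGd x (by rwa [uIcc_of_le hab] at hx)) iG1
  -- the majorant
  set H : ℝ → ℝ := fun x => M1 / (2 * ν) * x + 2 * M0 / ν * Real.arctan (Φ1 x / ν) with hH
  set H1 : ℝ → ℝ := fun x => M1 / (2 * ν) + 2 * M0 * (Φ2 x / R x) with hH1
  have hHd : ∀ x ∈ Icc a b, HasDerivAt H (H1 x) x := by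
    intro x hx
    have h1 := (((hΦ1 x hx).div_const ν).arctan).const_mul (2 * M0 / ν)
    have h2 := ((hasDerivAt_id x).const_mul (M1 / (2 * ν))).add h1
    refine h2.congr_deriv ?_
    simp only [hH1, hR]
    rw [← hν2]
    field_simp
    ring
  have cH1 : ContinuousOn H1 (Icc a b) :=
    continuousOn_const.add (continuousOn_const.mul (hΦ2.div cR (fun x _ => (hRpos x).ne')))
  have iH1 : IntervalIntegrable H1 volume a b := cH1.intervalIntegrable_of_Icc hab
  have hFH : ∫ x in a..b, H1 x = H b - H a :=
    intervalIntegral.integral_eq_sub_of_hasDerivAt (fun x hx => hHd x (by rwa [uIcc_of_le hab] at hx)) iH1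
  have hwb : ∀ x, |w x| ≤ 1 / (2 * ν) := by
    intro x
    simp only [hw]
    rw [abs_div, abs_of_pos (hRpos x), div_le_div_iff₀ (hRpos x) (by positivity)]
    simp only [hR]
    rw [← hν2, ← sq_abs (Φ1 x)]
    nlinarith [sq_nonneg (|Φ1 x| - ν)]
  have hpt : ∀ x ∈ Icc a b, ‖E x * A x - G1 x‖ ≤ H1 x := by
    intro x hx
    have hRx := hRpos x
    have e1 : E x * A x - G1 x = E x * (A x * ((μ / R x : ℝ) : ℂ) + A1 x * (Complex.I * (w x : ℂ))
        + A x * (Complex.I * (w1 x : ℂ))) := by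
      have : ((Φ1 x : ℝ) : ℂ) * (w x : ℂ) = 1 - ((μ / R x : ℝ) : ℂ) := by
        rw [← Complex.ofReal_mul, ← Complex.ofReal_one, ← Complex.ofReal_sub]
        congr 1
        simp only [hw]
        field_simp
        simp only [hR]; ring
      simp only [hG1]
      linear_combination (-E x * A x * Complex.I ^ 2 * -1) * this + (E x * A x * (1 - ((μ / R x : ℝ) : ℂ))) * Complex.I_sq
    rw [e1, norm_mul, hEn, one_mul]
    have hp2 : 0 < Φ2 x := hμ.trans_le (hlow x hx)
    have b1 : ‖((μ / R x : ℝ) : ℂ)‖ ≤ Φ2 x / R x := by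
      rw [Complex.norm_real, Real.norm_eq_abs, abs_of_pos (by positivity)]
      gcongr
      exact hlow x hx
    have b2 : ‖Complex.I * (w x : ℂ)‖ ≤ 1 / (2 * ν) := by
      rw [norm_mul, Complex.norm_I, one_mul, Complex.norm_real]; exact hwb x
    have b3 : ‖Complex.I * (w1 x : ℂ)‖ ≤ Φ2 x / R x := by
      rw [norm_mul, Complex.norm_I, one_mul, Complex.norm_real, Real.norm_eq_abs]
      simp only [hw1]
      have : Φ2 x * R x - Φ1 x * (2 * Φ1 x * Φ2 x) = Φ2 x * (μ - Φ1 x ^ 2) := by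
        simp only [hR]; ring
      rw [this, abs_div, abs_mul, abs_of_pos hp2, abs_of_pos (by positivity : 0 < R x ^ 2)]
      rw [div_le_div_iff₀ (by positivity) hRx]
      have h3 : |μ - Φ1 x ^ 2| ≤ R x := by
        simp only [hR]
        rw [abs_le]; constructor <;> nlinarith [sq_nonneg (Φ1 x)]
      calc Φ2 x * |μ - Φ1 x ^ 2| * R x ≤ Φ2 x * R x * R x := by gcongr
        _ = _ := by ring
    have n0 := hAb x hx
    have n1 := hA1b x hx
    have hM1 : 0 ≤ M1 := (norm_nonneg _).trans n1
    calc _ ≤ ‖A x‖ * ‖((μ / R x : ℝ) : ℂ)‖ + ‖A1 x‖ * ‖Complex.I * (w x : ℂ)‖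
        + ‖A x‖ * ‖Complex.I * (w1 x : ℂ)‖ := by
          refine (norm_add₃_le).trans ?_
          simp only [norm_mul]; rfl
      _ ≤ M0 * (Φ2 x / R x) + M1 * (1 / (2 * ν)) + M0 * (Φ2 x / R x) := by gcongr
      _ = H1 x := by simp only [hH1]; ring
  have hGn : ∀ x ∈ Icc a b, ‖G x‖ ≤ M0 / (2 * ν) := by
    intro x hx
    simp only [hG]
    rw [norm_mul, norm_mul, hEn, one_mul, norm_mul, norm_neg, Complex.norm_I, one_mul,
      Complex.norm_real, Real.norm_eq_abs]
    calc _ ≤ M0 * (1 / (2 * ν)) := by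
          gcongr
          · exact hAb x hx
          · exact hwb x
      _ = _ := by ring
  have hmain : ‖∫ x in a..b, (E x * A x - G1 x)‖ ≤ ∫ x in a..b, H1 x :=
    intervalIntegral.norm_integral_le_of_norm_le hab
      (Filter.Eventually.of_forall fun x hx => hpt x (Ioc_subset_Icc_self hx)) iH1
  rw [intervalIntegral.integral_sub iEA iG1, hFT, hFH] at hmain
  have hM1 : 0 ≤ M1 := (norm_nonneg _).trans (hA1b a (left_mem_Icc.2 hab))
  have harc : H b - H a ≤ M1 / (2 * ν) * (b - a) + 2 * M0 / ν * π := by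
    have h1 := Real.arctan_lt_pi_div_two (Φ1 b / ν)
    have h2 := Real.neg_pi_div_two_lt_arctan (Φ1 a / ν)
    have : 2 * M0 / ν * (Real.arctan (Φ1 b / ν) - Real.arctan (Φ1 a / ν)) ≤ 2 * M0 / ν * π := by
      gcongr; linarith
    simp only [hH]
    linarith
  have htri : ‖∫ x in a..b, E x * A x‖ ≤ ‖(∫ x in a..b, E x * A x) - (G b - G a)‖ + (‖G b‖ + ‖G a‖) := by
    calc _ = ‖((∫ x in a..b, E x * A x) - (G b - G a)) + (G b - G a)‖ := by congr 1; ring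
      _ ≤ _ := (norm_add_le _ _).trans (by gcongr; exact norm_sub_le _ _)
  have g1 := hGn a (left_mem_Icc.2 hab)
  have g2 := hGn b (right_mem_Icc.2 hab)
  have hpi : π ≤ 3.15 := Real.pi_lt_d2.le
  have hba : 0 ≤ b - a := by linarith
  calc _ ≤ M1 / (2 * ν) * (b - a) + 2 * M0 / ν * π + (M0 / (2 * ν) + M0 / (2 * ν)) := by linarith
    _ = (M1 * (b - a) / 2 + M0 * (2 * π + 1)) / ν := by field_simp; ring
    _ ≤ 8 * (M0 + M1 * (b - a)) / ν := by
      gcongr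
      nlinarith [mul_nonneg hM1 hba, mul_nonneg hM0 (sub_nonneg.2 hpi)]


open scoped FourierTransform in
lemma slice_aux (κ : ℝ → ℂ) (M B : ℝ) (hκm : Measurable κ) (hκb : ∀ x, ‖κ x‖ ≤ M)
    (hκs : ∀ x, x ∉ Icc 0 (2 * π) → κ x = 0) (c₁ c₂ : ℝ)
    (hκc : ∀ x, x ≠ c₁ → x ≠ c₂ → ContinuousAt κ x)
    (hκF : ∀ ξ, ‖𝓕 κ ξ‖ ≤ B) {ι : Type*} [Countable ι] (t : ι → ℝ) (f : ℝ → ℂ)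
    (hf : ∫⁻ y in Icc (0 : ℝ) (2 * π), ‖f y‖ₑ ^ (2 : ℝ) ≠ ∞) :
    ∃ P : ℝ → ℂ, Continuous P ∧
      (∀ i, ‖∫ y in Icc (0 : ℝ) (2 * π), κ (t i - y) * f y‖ₑ ≤ ‖P (t i)‖ₑ) ∧
      ∫⁻ θ, ‖P θ‖ₑ ^ (2 : ℝ) ≤
        ENNReal.ofReal (B ^ 2) * ∫⁻ y in Icc (0 : ℝ) (2 * π), ‖f y‖ₑ ^ (2 : ℝ) := by
  set X : Set ℝ := Icc (0 : ℝ) (2 * π) with hX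
  have hXm : MeasurableSet X := measurableSet_Icc
  set Gd : Set ι := {i | Integrable (fun y => κ (t i - y) * f y) (volume.restrict X)} with hGd
  set S : Gd → Set ℝ := fun i => {y | κ (t i - y) ≠ 0} with hS
  have hκmi : ∀ s : ℝ, Measurable fun y => κ (s - y) := fun s =>
    hκm.comp (measurable_const.sub measurable_id)
  have hSm : ∀ i, MeasurableSet (S i) := fun i =>
    (hκmi (t i)) (measurableSet_singleton (0 : ℂ)).compl
  set U : Set ℝ := ⋃ i, S i with hU
  have hUm : MeasurableSet U := MeasurableSet.iUnion hSm
  set g : ℝ → ℂ := X.indicator (U.indicator f) with hg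
  have hfm : AEMeasurable f ((volume.restrict X).restrict U) := by
    rw [hU, aemeasurable_iUnion_iff]
    intro i
    have h1 : AEMeasurable (fun y => κ (t i - y) * f y) ((volume.restrict X).restrict (S i)) :=
      (i.2 : Integrable _ _).aestronglyMeasurable.aemeasurable.restrict
    have h2 : AEMeasurable (fun y => (κ (t i - y))⁻¹ * (κ (t i - y) * f y))
        ((volume.restrict X).restrict (S i)) :=
      ((hκmi (t i)).inv.aemeasurable).mul h1
    refine h2.congr ?_
    filter_upwards [ae_restrict_mem (hSm i)] with y hy
    rw [← mul_assoc, inv_mul_cancel₀ hy, one_mul]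
  have hgm : AEMeasurable g volume := by
    rw [hg, aemeasurable_indicator_iff hXm, aemeasurable_indicator_iff hUm]
    exact hfm
  have hgle : ∀ y, ‖g y‖ₑ ^ (2 : ℝ) ≤ X.indicator (fun y => ‖f y‖ₑ ^ (2 : ℝ)) y := by
    intro y
    by_cases hy : y ∈ X
    · rw [hg, indicator_of_mem hy, indicator_of_mem hy]
      gcongr
      exact enorm_indicator_le_enorm_self _ _
    · simp [hg, hy]
  have hgN : ∫⁻ y, ‖g y‖ₑ ^ (2 : ℝ) ≤ ∫⁻ y in X, ‖f y‖ₑ ^ (2 : ℝ) := by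
    rw [← lintegral_indicator hXm]
    exact lintegral_mono hgle
  have hgs : ∀ x, x ∉ X → g x = 0 := fun x hx => by simp [hg, hx]
  have hg2 : MemLp g 2 volume := by
    refine ⟨hgm.aestronglyMeasurable, ?_⟩
    rw [eLpNorm_lt_top_iff_lintegral_rpow_enorm_lt_top (by norm_num) (by norm_num)]
    simpa using hgN.trans_lt hf.lt_top
  have hgi : Integrable g := by
    rw [← integrableOn_iff_integrable_of_support_subset (s := X)]
    · have : IsFiniteMeasure (volume.restrict X) := by
        constructor; rw [Measure.restrict_apply_univ]; exact measure_Icc_lt_top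
      exact (hg2.restrict _).integrable (by norm_num)
    · intro x hx; by_contra h; exact hx (hgs x h)
  refine ⟨fun θ => ∫ y, κ (θ - y) * g y, ?_, ?_, ?_⟩
  · rw [continuous_iff_continuousAt]
    intro θ
    apply continuousAt_of_dominated (bound := fun y => M * ‖g y‖)
    · filter_upwards with s
      exact ((hκmi s).aemeasurable.mul hgm).aestronglyMeasurable
    · filter_upwards with s
      filter_upwards with y
      rw [norm_mul]; gcongr; exact hκb _
    · exact hgi.norm.const_mul _
    · have h1 : ∀ᵐ y : ℝ, y ≠ θ - c₁ := by
        simp [ae_iff]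
      have h2 : ∀ᵐ y : ℝ, y ≠ θ - c₂ := by
        simp [ae_iff]
      filter_upwards [h1, h2] with y hy hy2
      have h1 : ContinuousAt κ (θ - y) := hκc _ (by intro h; apply hy; linarith)
        (by intro h; apply hy2; linarith)
      have h2 : ContinuousAt (fun s : ℝ => s - y) θ := by fun_prop
      exact (ContinuousAt.comp (f := fun s : ℝ => s - y) h1 h2).mul continuousAt_const
  · intro i
    by_cases hi : i ∈ Gd
    · apply le_of_eq
      congr 1
      rw [← integral_indicator hXm]
      congr 1
      ext y
      by_cases hy : y ∈ X
      · rw [indicator_of_mem hy]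
        simp only [hg, indicator_of_mem hy]
        by_cases h0 : κ (t i - y) = 0
        · simp [h0]
        · rw [indicator_of_mem]
          exact mem_iUnion.2 ⟨⟨i, hi⟩, h0⟩
      · simp [hg, hy]
    · rw [integral_undef hi]; simp
  · exact (conv_L2 κ g M B hκm hκb hκs hκF hg2 hgs).trans (by gcongr)

set_option maxHeartbeats 1000000 in
open scoped FourierTransform in
lemma nonmeas_aux (κ₁ κ : ℝ → ℂ) (M M₁ B : ℝ) (hB : 0 < B) (hM₁ : 0 < M₁)
    (hκm : Measurable κ) (hκb : ∀ x, ‖κ x‖ ≤ M)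
    (hκs : ∀ x, x ∉ Icc 0 (2 * π) → κ x = 0) (c₁ c₂ : ℝ)
    (hκc : ∀ x, x ≠ c₁ → x ≠ c₂ → ContinuousAt κ x)
    (hκF : ∀ ξ, ‖𝓕 κ ξ‖ ≤ B) (hκ₁ : ∀ x, ‖κ₁ x‖ ≤ M₁) (F : ℝ → ℝ → ℂ) :
    ∫⁻ θ, ‖∫ x in Icc (0 : ℝ) (2 * π), κ₁ (θ - x) *
        ∫ y in Icc (0 : ℝ) (2 * π), κ (θ - y) * F x y‖ₑ ^ (2 : ℝ) ≤
      ENNReal.ofReal (2 * π) * (ENNReal.ofReal (M₁ ^ 2 * B ^ 2) *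
        ∫⁻ x in Icc (0 : ℝ) (2 * π), ∫⁻ y in Icc (0 : ℝ) (2 * π), ‖F x y‖ₑ ^ (2 : ℝ)) := by
  set X : Set ℝ := Icc (0 : ℝ) (2 * π) with hX
  have hXm : MeasurableSet X := measurableSet_Icc
  set ν : Measure ℝ := volume.restrict X with hν
  have hfin : IsFiniteMeasure ν := by
    constructor; rw [Measure.restrict_apply_univ]; exact measure_Icc_lt_top
  set q : ℝ → ℝ → ℂ := fun θ x => κ₁ (θ - x) * ∫ y, κ (θ - y) * F x y ∂ν with hq
  set Rg : Set (ℝ × Lp ℂ 1 ν) := {z | ∃ h : Integrable (q z.1) ν, z.2 = h.toL1 (q z.1)} with hRg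
  have hone : Fact ((1 : ℝ≥0∞) ≠ ∞) := ⟨by simp⟩
  obtain ⟨T, hTs, hTc, hTd⟩ := (TopologicalSpace.IsSeparable.of_separableSpace Rg).exists_countable_dense_subset
  have hTcount : Countable T := hTc.to_subtype
  set pt : ℝ → ℝ → ℝ≥0∞ := fun θ x => ⨅ k : ℕ, ⨆ i : T,
    (if |i.1.1 - θ| < 1 / ((k : ℝ) + 1) then ‖(i.1.2 : ℝ → ℂ) x‖ₑ else 0) with hpt
  have hptm : Measurable (Function.uncurry pt) := by
    refine Measurable.iInf fun k => Measurable.iSup fun i => ?_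
    refine Measurable.ite ?_ ?_ measurable_const
    · exact measurableSet_lt (by fun_prop) measurable_const
    · exact ((Lp.stronglyMeasurable i.1.2).measurable.comp measurable_snd).enorm
  have claim1 : ∀ θ, Integrable (q θ) ν → ∀ᵐ x ∂ν, ‖q θ x‖ₑ ≤ pt θ x := by
    intro θ hθ
    have hmem : ((θ, hθ.toL1 (q θ)) : ℝ × Lp ℂ 1 ν) ∈ Rg := ⟨hθ, rfl⟩
    obtain ⟨u, huT, hu⟩ := mem_closure_iff_seq_limit.1 (hTd hmem)
    have hu1 : Filter.Tendsto (fun n => (u n).1) Filter.atTop (nhds θ) :=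
      (Prod.tendsto_iff _ _).1 hu |>.1
    have hu2 : Filter.Tendsto (fun n => (u n).2) Filter.atTop (nhds (hθ.toL1 (q θ))) :=
      (Prod.tendsto_iff _ _).1 hu |>.2
    obtain ⟨ns, hns, hae⟩ := (tendstoInMeasure_of_tendsto_Lp hu2).exists_seq_tendsto_ae
    filter_upwards [hae, hθ.coeFn_toL1] with x hx hx2
    rw [hx2] at hx
    refine le_iInf fun k => ?_
    refine le_of_tendsto hx.enorm ?_
    have hev := (hu1.comp hns.tendsto_atTop).eventually
      (Metric.ball_mem_nhds θ (by positivity : (0 : ℝ) < 1 / ((k : ℝ) + 1)))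
    filter_upwards [hev] with n hn
    refine le_iSup_of_le (⟨u (ns n), huT _⟩ : T) ?_
    rw [if_pos]
    simpa [Real.dist_eq] using hn
  have claim2 : ∀ᵐ x ∂ν, ∫⁻ θ, pt θ x ^ (2 : ℝ) ≤
      ENNReal.ofReal (M₁ ^ 2 * B ^ 2) * ∫⁻ y, ‖F x y‖ₑ ^ (2 : ℝ) ∂ν := by
    have hae : ∀ᵐ x ∂ν, ∀ i : T, (i.1.2 : ℝ → ℂ) x = q i.1.1 x := by
      rw [ae_all_iff]
      intro i
      obtain ⟨h, h2⟩ := hTs i.2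
      rw [h2]
      exact h.coeFn_toL1
    filter_upwards [hae] with x hx
    by_cases hN : ∫⁻ y, ‖F x y‖ₑ ^ (2 : ℝ) ∂ν = ∞
    · rw [hN, ENNReal.mul_top]
      · exact le_top
      · simp only [ne_eq, ENNReal.ofReal_eq_zero, not_le]; positivity
    obtain ⟨P, hPc, hP1, hP2⟩ := slice_aux κ M B hκm hκb hκs c₁ c₂ hκc hκF
      (fun i : T => i.1.1) (F x) hN
    have hle : ∀ θ, pt θ x ≤ ENNReal.ofReal M₁ * ‖P θ‖ₑ := by
      intro θ
      have hcont : Continuous fun s => ENNReal.ofReal M₁ * ‖P s‖ₑ :=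
        (ENNReal.continuous_const_mul ENNReal.ofReal_ne_top).comp hPc.enorm
      refine le_of_forall_gt_imp_ge_of_dense fun c hc => ?_
      have hev := (hcont.tendsto θ).eventually (gt_mem_nhds hc)
      obtain ⟨ρ, hρ, hball⟩ := Metric.eventually_nhds_iff.1 hev
      obtain ⟨k, hk⟩ := exists_nat_one_div_lt hρ
      refine iInf_le_of_le k (iSup_le fun i => ?_)
      split_ifs with hi
      · rw [hx i]
        have h1 : ‖q i.1.1 x‖ₑ ≤ ENNReal.ofReal M₁ * ‖P i.1.1‖ₑ := by
          simp only [hq]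
          rw [enorm_mul]
          gcongr
          · rw [← ofReal_norm]
            exact ENNReal.ofReal_le_ofReal (hκ₁ _)
          · exact hP1 i
        refine h1.trans (hball ?_).le
        rw [Real.dist_eq]; linarith
      · exact zero_le
    calc ∫⁻ θ, pt θ x ^ (2 : ℝ) ≤ ∫⁻ θ, ENNReal.ofReal (M₁ ^ 2) * ‖P θ‖ₑ ^ (2 : ℝ) := by
          refine lintegral_mono fun θ => ?_
          calc pt θ x ^ (2 : ℝ) ≤ (ENNReal.ofReal M₁ * ‖P θ‖ₑ) ^ (2 : ℝ) := by
                gcongr; exact hle θ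
            _ = _ := by
                rw [ENNReal.mul_rpow_of_nonneg _ _ (by norm_num), ENNReal.ofReal_pow hM₁.le]
                norm_cast
      _ = ENNReal.ofReal (M₁ ^ 2) * ∫⁻ θ, ‖P θ‖ₑ ^ (2 : ℝ) :=
          lintegral_const_mul' _ _ ENNReal.ofReal_ne_top
      _ ≤ ENNReal.ofReal (M₁ ^ 2) * (ENNReal.ofReal (B ^ 2) * ∫⁻ y, ‖F x y‖ₑ ^ (2 : ℝ) ∂ν) := by
          gcongr
      _ = _ := by rw [ENNReal.ofReal_mul (by positivity), mul_assoc]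
  have claim3 : ∀ θ, ‖∫ x, q θ x ∂ν‖ₑ ^ (2 : ℝ) ≤
      ENNReal.ofReal (2 * π) * ∫⁻ x, pt θ x ^ (2 : ℝ) ∂ν := by
    intro θ
    by_cases hθ : Integrable (q θ) ν
    · have hm : Measurable (pt θ) := Measurable.of_uncurry_left hptm
      have h1 : ‖∫ x, q θ x ∂ν‖ₑ ≤ ∫⁻ x, 1 * pt θ x ∂ν := by
        simp only [one_mul]
        exact (enorm_integral_le_lintegral_enorm _).trans (lintegral_mono_ae (claim1 θ hθ))
      have h2 := ENNReal.lintegral_mul_le_Lp_mul_Lq ν (Real.HolderConjugate.two_two)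
        (f := fun _ => 1) (g := pt θ) aemeasurable_const hm.aemeasurable
      have h3 : ν univ = ENNReal.ofReal (2 * π) := by
        rw [hν, Measure.restrict_apply_univ, hX, Real.volume_Icc, sub_zero]
      calc _ ≤ ((∫⁻ _, (1 : ℝ≥0∞) ^ (2 : ℝ) ∂ν) ^ (1 / (2 : ℝ)) *
            (∫⁻ x, pt θ x ^ (2 : ℝ) ∂ν) ^ (1 / (2 : ℝ))) ^ (2 : ℝ) := by
            gcongr; exact h1.trans h2
        _ = _ := by
            rw [ENNReal.mul_rpow_of_nonneg _ _ (by norm_num), ← ENNReal.rpow_mul,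
              ← ENNReal.rpow_mul]
            simp [h3]
    · rw [integral_undef hθ]; simp
  calc _ ≤ ∫⁻ θ, ENNReal.ofReal (2 * π) * ∫⁻ x, pt θ x ^ (2 : ℝ) ∂ν := lintegral_mono claim3
    _ = ENNReal.ofReal (2 * π) * ∫⁻ θ, ∫⁻ x, pt θ x ^ (2 : ℝ) ∂ν :=
        lintegral_const_mul' _ _ ENNReal.ofReal_ne_top
    _ = ENNReal.ofReal (2 * π) * ∫⁻ x, (∫⁻ θ, pt θ x ^ (2 : ℝ)) ∂ν := by
        rw [lintegral_lintegral_swap]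
        exact (hptm.pow_const _).aemeasurable
    _ ≤ ENNReal.ofReal (2 * π) * ∫⁻ x, ENNReal.ofReal (M₁ ^ 2 * B ^ 2) *
          ∫⁻ y, ‖F x y‖ₑ ^ (2 : ℝ) ∂ν ∂ν := by
        gcongr ENNReal.ofReal (2 * π) * ?_
        exact lintegral_mono_ae claim2
    _ = _ := by rw [lintegral_const_mul' _ _ ENNReal.ofReal_ne_top]


lemma b_bounds (δ : ℝ) (hδ : 0 ≤ δ) (a : ℝ → ℂ) (ha : IsSymbol0 a)
    (β : ℝ → ℝ) (hβ : ContDiff ℝ (⊤ : ℕ∞) β)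
    (hβs : Function.support β ⊆ Set.Icc (3 / 8) (4 / 3)) :
    ∃ C0 C1 : ℝ, 0 ≤ C0 ∧ 0 ≤ C1 ∧ ∀ j : ℕ, ContDiffOn ℝ 1 (bfun δ a β j) (Ioi 0) ∧
      (∀ ρ > 0, ‖bfun δ a β j ρ‖ ≤ C0) ∧ (∀ ρ > 0, ‖deriv (bfun δ a β j) ρ‖ ≤ C1) := by
  obtain ⟨ha1, ⟨Ma, hMa⟩, ha3⟩ := ha
  obtain ⟨Ca, hCa⟩ := ha3 1
  have hβ1 : ContDiff ℝ 1 β := hβ.of_le (by exact_mod_cast le_top)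
  obtain ⟨B0, hB0⟩ := (isCompact_Icc (a := (3 / 8 : ℝ)) (b := 4 / 3)).exists_bound_of_continuousOn
    hβ1.continuous.continuousOn
  obtain ⟨B1, hB1⟩ := (isCompact_Icc (a := (3 / 8 : ℝ)) (b := 4 / 3)).exists_bound_of_continuousOn
    (hβ1.continuous_deriv le_rfl).continuousOn
  have h38 : (3 / 8 : ℝ) ∈ Icc (3 / 8 : ℝ) (4 / 3) := by constructor <;> norm_num
  have hB0p : 0 ≤ B0 := (norm_nonneg _).trans (hB0 _ h38)
  have hB1p : 0 ≤ B1 := (norm_nonneg _).trans (hB1 _ h38)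
  have hMap : 0 ≤ Ma := (norm_nonneg _).trans (hMa 1 one_pos)
  have hCap : 0 ≤ Ca := by
    have := (norm_nonneg _).trans (hCa 1 one_pos)
    simpa using this
  set e : ℝ := 3 / 2 + δ with he
  have hepos : 0 < e := by positivity
  set R0 : ℝ := (3 / 8 : ℝ) ^ (-e) with hR0
  set R1 : ℝ := e * (3 / 8 : ℝ) ^ (-e - 1) with hR1
  have hR0p : 0 ≤ R0 := by positivity
  have hR1p : 0 ≤ R1 := by positivity
  have had : ∀ x > 0, HasDerivAt a (deriv a x) x := by
    intro x hx
    exact ((ha1.differentiableOn (by simp)).differentiableAt (Ioi_mem_nhds hx)).hasDerivAt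
  have hadb : ∀ x > 0, ‖deriv a x‖ ≤ Ca * x⁻¹ := by
    intro x hx
    have := hCa x hx
    rw [iteratedDerivWithin_one, derivWithin_of_isOpen isOpen_Ioi hx] at this
    simpa [Real.rpow_neg_one] using this
  refine ⟨B0 * R0 * Ma, (B1 * R0 + B0 * R1) * Ma + B0 * R0 * (Ca * (8 / 3)), by positivity, by positivity, fun j => ?_⟩
  set p : ℝ := (2 : ℝ) ^ (-(j : ℝ)) with hp
  set L : ℝ := (2 : ℝ) ^ (j : ℝ) with hL
  have hpp : 0 < p := by positivity
  have hLp : 0 < L := by positivity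
  have hr0 : ∀ ρ ∈ Icc (3 / 8 : ℝ) (4 / 3), (p + ρ) ^ (-e) ≤ R0 := by
    intro ρ hρ
    exact Real.rpow_le_rpow_of_nonpos (by norm_num) (by linarith [hρ.1]) (by linarith)
  have hr1 : ∀ ρ ∈ Icc (3 / 8 : ℝ) (4 / 3), e * (p + ρ) ^ (-e - 1) ≤ R1 := by
    intro ρ hρ
    apply mul_le_mul_of_nonneg_left _ hepos.le
    exact Real.rpow_le_rpow_of_nonpos (by norm_num) (by linarith [hρ.1]) (by linarith)
  have hzero : ∀ ρ, ρ ∉ Icc (3 / 8 : ℝ) (4 / 3) → bfun δ a β j ρ = 0 := by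
    intro ρ hρ
    have : β ρ = 0 := by
      by_contra h; exact hρ (hβs h)
    simp [bfun, this]
  refine ⟨?_, ?_, ?_⟩
  · unfold bfun
    refine ContDiffOn.mul (ContDiffOn.mul ?_ ?_) ?_
    · exact (Complex.ofRealCLM.contDiff.comp hβ1).contDiffOn
    · refine Complex.ofRealCLM.contDiff.comp_contDiffOn ?_
      intro ρ hρ
      have hρ' : (0 : ℝ) < ρ := hρ
      exact (ContDiffAt.rpow_const_of_ne (by fun_prop) (by positivity)).contDiffWithinAt
    · refine ContDiffOn.comp (t := Ioi 0) (ha1.of_le (by exact_mod_cast le_top)) (by fun_prop) ?_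
      intro ρ hρ
      have hρ' : (0 : ℝ) < ρ := hρ
      exact mul_pos hLp hρ'
  · intro ρ hρ
    by_cases hm : ρ ∈ Icc (3 / 8 : ℝ) (4 / 3)
    · unfold bfun
      rw [norm_mul, norm_mul, Complex.norm_real, Complex.norm_real]
      gcongr
      · exact hB0 ρ hm
      · rw [Real.norm_eq_abs, abs_of_pos (by positivity)]
        exact hr0 ρ hm
      · exact hMa _ (by positivity)
    · rw [hzero ρ hm, norm_zero]; positivity
  · intro ρ hρ
    by_cases hm : ρ ∈ Icc (3 / 8 : ℝ) (4 / 3)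
    · have d1 : HasDerivAt (fun x => ((β x : ℝ) : ℂ)) ((deriv β ρ : ℝ) : ℂ) ρ :=
        ((hβ1.differentiable (by simp)).differentiableAt.hasDerivAt).ofReal_comp
      have d2 : HasDerivAt (fun x => (((p + x) ^ (-e) : ℝ) : ℂ))
          (((1 * (-e) * (p + ρ) ^ (-e - 1) : ℝ)) : ℂ) ρ :=
        HasDerivAt.ofReal_comp (HasDerivAt.rpow_const ((hasDerivAt_id ρ).const_add p)
          (Or.inl (by show p + ρ ≠ 0; positivity)))
      have d3 : HasDerivAt (fun x => a (L * x)) ((L * 1) • deriv a (L * ρ)) ρ :=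
        HasDerivAt.scomp ρ (had _ (by positivity)) ((hasDerivAt_id ρ).const_mul L)
      have d4 := (d1.mul d2).mul d3
      have e1 : deriv (bfun δ a β j) ρ = _ := d4.deriv
      rw [e1]
      have n1 : ‖((deriv β ρ : ℝ) : ℂ)‖ ≤ B1 := by rw [Complex.norm_real]; exact hB1 ρ hm
      have n2 : ‖((β ρ : ℝ) : ℂ)‖ ≤ B0 := by rw [Complex.norm_real]; exact hB0 ρ hm
      have n3 : ‖(((p + ρ) ^ (-e) : ℝ) : ℂ)‖ ≤ R0 := by
        rw [Complex.norm_real, Real.norm_eq_abs, abs_of_pos (by positivity)]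
        exact hr0 ρ hm
      have n4 : ‖(((1 * (-e) * (p + ρ) ^ (-e - 1) : ℝ)) : ℂ)‖ ≤ R1 := by
        rw [Complex.norm_real, Real.norm_eq_abs, one_mul, neg_mul, abs_neg,
          abs_of_pos (by positivity)]
        exact hr1 ρ hm
      have n5 : ‖a (L * ρ)‖ ≤ Ma := hMa _ (by positivity)
      have n6 : ‖(L * 1) • deriv a (L * ρ)‖ ≤ Ca * (8 / 3) := by
        rw [norm_smul, mul_one, Real.norm_eq_abs, abs_of_pos hLp]
        calc L * ‖deriv a (L * ρ)‖ ≤ L * (Ca * (L * ρ)⁻¹) := by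
              gcongr; exact hadb _ (by positivity)
          _ = Ca * ρ⁻¹ := by field_simp
          _ ≤ Ca * (8 / 3) := by
              gcongr
              rw [inv_le_comm₀ hρ (by norm_num)]
              norm_num; linarith [hm.1]
      refine (norm_add_le _ _).trans ?_
      simp only [Pi.mul_apply]
      rw [norm_mul, norm_mul, norm_mul]
      gcongr
      refine (norm_add_le _ _).trans ?_
      rw [norm_mul, norm_mul]
      gcongr
    · have : bfun δ a β j =ᶠ[nhds ρ] fun _ => 0 := by
        filter_upwards [isClosed_Icc.isOpen_compl.mem_nhds hm] with x hx
        exact hzero x hx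
      rw [this.deriv_eq]
      simp; positivity



lemma cos_le_aux (φ : ℝ) (h : φ ∈ Icc (Real.pi - 1) Real.pi) : Real.cos φ ≤ -1 / 2 := by
  have h1 := Real.one_sub_sq_div_two_le_cos (x := Real.pi - φ)
  rw [Real.cos_pi_sub] at h1
  nlinarith [h.1, h.2]

lemma dG_facts (r s φ : ℝ) (hr : 0 < r) (hs : 0 < s) (h : φ ∈ Icc (Real.pi - 1) Real.pi) :
    0 < dG r s φ ∧ r ≤ dG r s φ ∧ s ≤ dG r s φ ∧ dG r s φ ≤ r + s := by
  have hc := cos_le_aux φ h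
  have hc2 := Real.neg_one_le_cos φ
  have hrs : 0 < r * s := by positivity
  have h1 : r ≤ dG r s φ := Real.le_sqrt_of_sq_le (by nlinarith)
  refine ⟨by linarith, h1, Real.le_sqrt_of_sq_le (by nlinarith), ?_⟩
  unfold dG
  rw [Real.sqrt_le_left (by positivity)]
  nlinarith

lemma dG_deriv (r s φ : ℝ) (hr : 0 < r) (hs : 0 < s) (h : φ ∈ Icc (Real.pi - 1) Real.pi) :
    HasDerivAt (dG r s) (r * s * Real.sin φ / dG r s φ) φ := by
  have hf := dG_facts r s φ hr hs h
  have hD : r ^ 2 + s ^ 2 - 2 * r * s * Real.cos φ ≠ 0 := by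
    intro h0
    have := hf.1
    unfold dG at this
    rw [h0] at this
    simp at this
  have h1 : HasDerivAt (fun x => r ^ 2 + s ^ 2 - 2 * r * s * Real.cos x)
      (-(2 * r * s * (-Real.sin φ))) φ :=
    ((Real.hasDerivAt_cos φ).const_mul (2 * r * s)).const_sub _
  have h2 : HasDerivAt (dG r s) _ φ := h1.sqrt hD
  convert h2 using 1
  show r * s * Real.sin φ / √(r ^ 2 + s ^ 2 - 2 * r * s * Real.cos φ) = _
  field_simp

lemma dG_deriv2 (r s φ : ℝ) (hr : 0 < r) (hs : 0 < s) (h : φ ∈ Icc (Real.pi - 1) Real.pi) :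
    HasDerivAt (fun x => r * s * Real.sin x / dG r s x)
      ((r * s * Real.cos φ * dG r s φ -
        r * s * Real.sin φ * (r * s * Real.sin φ / dG r s φ)) / dG r s φ ^ 2) φ :=
  ((Real.hasDerivAt_sin φ).const_mul (r * s)).div (dG_deriv r s φ hr hs h)
    (dG_facts r s φ hr hs h).1.ne'

lemma dG_deriv2_le (r s φ : ℝ) (hr : 0 < r) (hs : 0 < s) (hr4 : r ≤ 4 / 3) (hs4 : s ≤ 4 / 3)
    (h : φ ∈ Icc (Real.pi - 1) Real.pi) :
    (r * s * Real.cos φ * dG r s φ -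
        r * s * Real.sin φ * (r * s * Real.sin φ / dG r s φ)) / dG r s φ ^ 2
      ≤ -(r * s / 16) := by
  obtain ⟨h0, h1, h2, h3⟩ := dG_facts r s φ hr hs h
  have hc := cos_le_aux φ h
  set d := dG r s φ
  have hrs : 0 < r * s := by positivity
  have e1 : 0 ≤ r * s * Real.sin φ * (r * s * Real.sin φ / d) := by
    have : r * s * Real.sin φ * (r * s * Real.sin φ / d) = (r * s * Real.sin φ) ^ 2 / d := by ring
    rw [this]; positivity
  rw [div_le_iff₀ (by positivity)]
  have e2 : r * s * Real.cos φ * d ≤ r * s * (-1 / 2) * d := by gcongr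
  have e3 : r * s * d * (d / 16) ≤ r * s * d * (1 / 2) := by
    apply mul_le_mul_of_nonneg_left _ (by positivity)
    linarith
  nlinarith

lemma dG_deriv_abs (r s φ : ℝ) (hr : 0 < r) (hs : 0 < s) (hr4 : r ≤ 4 / 3)
    (h : φ ∈ Icc (Real.pi - 1) Real.pi) :
    |r * s * Real.sin φ / dG r s φ| ≤ 4 / 3 := by
  obtain ⟨h0, h1, h2, h3⟩ := dG_facts r s φ hr hs h
  rw [abs_div, abs_of_pos h0, div_le_iff₀ h0, abs_mul, abs_of_pos (by positivity : 0 < r * s)]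
  have := Real.abs_sin_le_one φ
  calc r * s * |Real.sin φ| ≤ r * s * 1 := by gcongr
    _ ≤ 4 / 3 * dG r s φ := by rw [mul_one]; gcongr

/-- One factor of the kernel, with sign `σ` in the phase. -/
def kap (δ : ℝ) (a : ℝ → ℂ) (β η : ℝ → ℝ) (j : ℕ) (σ r s φ : ℝ) : ℂ :=
  bfun δ a β j (dG r s φ) *
    Complex.exp (Complex.I * ((σ * ((2 : ℝ) ^ (j : ℝ) * dG r s φ) : ℝ) : ℂ)) *
    Set.indicator (Set.Icc (0 : ℝ) Real.pi) (fun _ => (1 : ℂ)) |φ| * ((η φ : ℝ) : ℂ)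

lemma BK_eq (δ : ℝ) (a : ℝ → ℂ) (β η : ℝ → ℝ) (j : ℕ) (r s t x y : ℝ) :
    BK δ a β η j r s t x y = (((2 : ℝ) ^ (-(2 * (j : ℝ)) * (3 / 2 + δ)) : ℝ) : ℂ) *
      (kap δ a β η j 1 r s (t - x) * kap δ a β η j (-1) r s (t - y)) := by
  unfold BK kap
  have : Complex.exp (Complex.I * (((2 : ℝ) ^ (j : ℝ) *
        (dG r s (t - x) - dG r s (t - y)) : ℝ) : ℂ)) =
      Complex.exp (Complex.I * ((1 * ((2 : ℝ) ^ (j : ℝ) * dG r s (t - x)) : ℝ) : ℂ)) *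
      Complex.exp (Complex.I * (((-1) * ((2 : ℝ) ^ (j : ℝ) * dG r s (t - y)) : ℝ) : ℂ)) := by
    rw [← Complex.exp_add]
    congr 1
    push_cast
    ring
  rw [this]
  ring

lemma BT_eq (δ : ℝ) (a : ℝ → ℂ) (β η : ℝ → ℝ) (j : ℕ) (r s : ℝ) (F : ℝ → ℝ → ℂ) (t : ℝ) :
    BT δ a β η j r s F t = (((2 : ℝ) ^ (-(2 * (j : ℝ)) * (3 / 2 + δ)) : ℝ) : ℂ) *
      ∫ x in Icc (0 : ℝ) (2 * Real.pi), kap δ a β η j 1 r s (t - x) *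
        ∫ y in Icc (0 : ℝ) (2 * Real.pi), kap δ a β η j (-1) r s (t - y) * F x y := by
  unfold BT
  rw [← integral_const_mul]
  congr 1
  ext x
  rw [← mul_assoc, ← integral_const_mul]
  congr 1
  ext y
  rw [BK_eq]
  ring

lemma kap_ind (δ : ℝ) (a : ℝ → ℂ) (β η : ℝ → ℝ) (j : ℕ) (σ r s ε : ℝ) (hε : 0 < ε)
    (hε2 : ε ≤ 1 / 2)
    (hη : Function.support η ⊆ Set.Icc (Real.pi - 2 * ε) (Real.pi + 2 * ε)) :
    kap δ a β η j σ r s = Set.indicator (Icc (Real.pi - 2 * ε) Real.pi)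
      (fun φ => Complex.exp (Complex.I * ((σ * ((2 : ℝ) ^ (j : ℝ) * dG r s φ) : ℝ) : ℂ)) *
        (bfun δ a β j (dG r s φ) * ((η φ : ℝ) : ℂ))) := by
  have hpi := Real.pi_gt_three
  ext φ
  by_cases hφ : φ ∈ Icc (Real.pi - 2 * ε) Real.pi
  · rw [Set.indicator_of_mem hφ]
    unfold kap
    have h0 : 0 ≤ φ := by linarith [hφ.1]
    rw [Set.indicator_of_mem (by rw [abs_of_nonneg h0]; exact ⟨h0, hφ.2⟩)]
    ring
  · rw [Set.indicator_of_notMem hφ]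
    unfold kap
    by_cases hz : η φ = 0
    · simp [hz]
    · have h1 := hη hz
      have h0 : 0 ≤ φ := by linarith [h1.1]
      rw [Set.indicator_of_notMem]
      · simp
      · rw [abs_of_nonneg h0]
        intro h2
        exact hφ ⟨h1.1, h2.2⟩

lemma kap_zero (δ : ℝ) (a : ℝ → ℂ) (β η : ℝ → ℝ) (j : ℕ) (σ r s ε : ℝ) (hε : 0 < ε)
    (hε2 : ε ≤ 1 / 2) (hr : 0 < r) (hs : 0 < s) (hrs : 4 / 3 < r ∨ 4 / 3 < s)
    (hβs : Function.support β ⊆ Set.Icc (3 / 8) (4 / 3))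
    (hη : Function.support η ⊆ Set.Icc (Real.pi - 2 * ε) (Real.pi + 2 * ε)) (φ : ℝ) :
    kap δ a β η j σ r s φ = 0 := by
  rw [kap_ind δ a β η j σ r s ε hε hε2 hη]
  by_cases hφ : φ ∈ Icc (Real.pi - 2 * ε) Real.pi
  · rw [Set.indicator_of_mem hφ]
    obtain ⟨h0, h1, h2, h3⟩ := dG_facts r s φ hr hs ⟨by linarith [hφ.1], hφ.2⟩
    have : β (dG r s φ) = 0 := by
      by_contra h
      have := (hβs h).2
      rcases hrs with h | h <;> linarith
    simp [bfun, this]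
  · rw [Set.indicator_of_notMem hφ]

lemma kap_main (δ : ℝ) (hδ : 0 ≤ δ) (a : ℝ → ℂ) (ha : IsSymbol0 a)
    (β : ℝ → ℝ) (hβ : ContDiff ℝ (⊤ : ℕ∞) β)
    (hβs : Function.support β ⊆ Set.Icc (3 / 8) (4 / 3))
    (ε : ℝ) (hε : 0 < ε) (hε2 : ε ≤ 1 / 2) (η : ℝ → ℝ) (hη : ContDiff ℝ (⊤ : ℕ∞) η)
    (hηs : Function.support η ⊆ Set.Icc (Real.pi - 2 * ε) (Real.pi + 2 * ε)) :
    ∃ K : ℝ, 0 < K ∧ ∀ (j : ℕ) (r s : ℝ), 0 < r → 0 < s → r ≤ 4 / 3 → s ≤ 4 / 3 →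
      (∀ σ φ, ‖kap δ a β η j σ r s φ‖ ≤ K) ∧
      (∀ φ, φ ≠ Real.pi - 2 * ε → φ ≠ Real.pi → ContinuousAt (kap δ a β η j (-1) r s) φ) ∧
      Measurable (kap δ a β η j (-1) r s) ∧
      (∀ ξ, ‖FourierTransform.fourier (kap δ a β η j (-1) r s) ξ‖ ≤ K) ∧
      (∀ ξ, ‖FourierTransform.fourier (kap δ a β η j (-1) r s) ξ‖ ≤
        K / √((2 : ℝ) ^ (j : ℝ) * r * s)) := by
  obtain ⟨C0, C1, hC0, hC1, hb⟩ := b_bounds δ hδ a ha β hβ hβs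
  have hη1 : ContDiff ℝ 1 η := hη.of_le (by exact_mod_cast le_top)
  obtain ⟨E0, hE0⟩ := (isCompact_Icc (a := (Real.pi - 2 * ε)) (b := Real.pi)).exists_bound_of_continuousOn
    hη1.continuous.continuousOn
  obtain ⟨E1, hE1⟩ := (isCompact_Icc (a := (Real.pi - 2 * ε)) (b := Real.pi)).exists_bound_of_continuousOn
    (hη1.continuous_deriv le_rfl).continuousOn
  have hpiI : Real.pi ∈ Icc (Real.pi - 2 * ε) Real.pi := ⟨by linarith, le_rfl⟩
  have hE0p : 0 ≤ E0 := (norm_nonneg _).trans (hE0 _ hpiI)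
  have hE1p : 0 ≤ E1 := (norm_nonneg _).trans (hE1 _ hpiI)
  set M0 := C0 * E0 with hM0
  set M1 := C1 * (4 / 3) * E0 + C0 * E1 with hM1
  have hM0p : 0 ≤ M0 := by positivity
  have hM1p : 0 ≤ M1 := by positivity
  refine ⟨32 * (M0 + M1) + 1, by positivity, ?_⟩
  intro j r s hr hs hr4 hs4
  obtain ⟨hbd, hb0, hb1⟩ := hb j
  set L : ℝ := (2 : ℝ) ^ (j : ℝ) with hL
  have hLp : 0 < L := by positivity
  have hsub : ∀ φ ∈ Icc (Real.pi - 2 * ε) Real.pi, φ ∈ Icc (Real.pi - 1) Real.pi :=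
    fun φ h => ⟨by linarith [h.1], h.2⟩
  -- amplitude
  set A : ℝ → ℂ := fun φ => bfun δ a β j (dG r s φ) * ((η φ : ℝ) : ℂ) with hA
  set d1 : ℝ → ℝ := fun φ => r * s * Real.sin φ / dG r s φ with hd1
  set d2 : ℝ → ℝ := fun φ => (r * s * Real.cos φ * dG r s φ -
        r * s * Real.sin φ * (r * s * Real.sin φ / dG r s φ)) / dG r s φ ^ 2 with hd2
  set A1 : ℝ → ℂ := fun φ => (d1 φ • deriv (bfun δ a β j) (dG r s φ)) * ((η φ : ℝ) : ℂ) +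
    bfun δ a β j (dG r s φ) * ((deriv η φ : ℝ) : ℂ) with hA1
  have hdd : ∀ φ ∈ Icc (Real.pi - 2 * ε) Real.pi, HasDerivAt (dG r s) (d1 φ) φ :=
    fun φ h => dG_deriv r s φ hr hs (hsub φ h)
  have hdd2 : ∀ φ ∈ Icc (Real.pi - 2 * ε) Real.pi, HasDerivAt d1 (d2 φ) φ :=
    fun φ h => dG_deriv2 r s φ hr hs (hsub φ h)
  have hdpos : ∀ φ ∈ Icc (Real.pi - 2 * ε) Real.pi, 0 < dG r s φ :=
    fun φ h => (dG_facts r s φ hr hs (hsub φ h)).1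
  have hdc : ContinuousOn (dG r s) (Icc (Real.pi - 2 * ε) Real.pi) :=
    fun φ h => (hdd φ h).continuousAt.continuousWithinAt
  have hd1c : ContinuousOn d1 (Icc (Real.pi - 2 * ε) Real.pi) :=
    fun φ h => (hdd2 φ h).continuousAt.continuousWithinAt
  have hd2c : ContinuousOn d2 (Icc (Real.pi - 2 * ε) Real.pi) := by
    refine ContinuousOn.div ?_ (hdc.pow 2) (fun φ h => pow_ne_zero 2 (hdpos φ h).ne')
    refine ContinuousOn.sub (ContinuousOn.mul (by fun_prop) hdc) (ContinuousOn.mul (by fun_prop) hd1c)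
  have hAd : ∀ φ ∈ Icc (Real.pi - 2 * ε) Real.pi, HasDerivAt A (A1 φ) φ := by
    intro φ h
    have g1 : HasDerivAt (bfun δ a β j) (deriv (bfun δ a β j) (dG r s φ)) (dG r s φ) :=
      ((hbd.differentiableOn (by simp)).differentiableAt (Ioi_mem_nhds (hdpos φ h))).hasDerivAt
    have g2 := HasDerivAt.scomp φ g1 (hdd φ h)
    have g3 : HasDerivAt (fun x => ((η x : ℝ) : ℂ)) ((deriv η φ : ℝ) : ℂ) φ :=
      ((hη1.differentiable (by simp)).differentiableAt.hasDerivAt).ofReal_comp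
    exact g2.mul g3
  have hA1c : ContinuousOn A1 (Icc (Real.pi - 2 * ε) Real.pi) := by
    have g0 : MapsTo (dG r s) (Icc (Real.pi - 2 * ε) Real.pi) (Ioi 0) := fun φ h => hdpos φ h
    have g1 : ContinuousOn (deriv (bfun δ a β j)) (Ioi 0) :=
      hbd.continuousOn_deriv_of_isOpen isOpen_Ioi le_rfl
    have g2 := g1.comp hdc g0
    have g3 := hbd.continuousOn.comp hdc g0
    have g4 : Continuous (fun x => ((η x : ℝ) : ℂ)) :=
      Complex.continuous_ofReal.comp hη1.continuous
    have g5 : Continuous (fun x => ((deriv η x : ℝ) : ℂ)) :=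
      Complex.continuous_ofReal.comp (hη1.continuous_deriv le_rfl)
    exact ((hd1c.smul g2).mul g4.continuousOn).add (g3.mul g5.continuousOn)
  have hAb : ∀ φ ∈ Icc (Real.pi - 2 * ε) Real.pi, ‖A φ‖ ≤ M0 := by
    intro φ h
    simp only [hA]
    rw [norm_mul, Complex.norm_real]
    exact mul_le_mul (hb0 _ (hdpos φ h)) (hE0 φ h) (norm_nonneg _) hC0
  have hA1b : ∀ φ ∈ Icc (Real.pi - 2 * ε) Real.pi, ‖A1 φ‖ ≤ M1 := by
    intro φ h
    simp only [hA1]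
    refine (norm_add_le _ _).trans ?_
    rw [norm_mul, norm_mul, norm_smul, Complex.norm_real, Complex.norm_real]
    have n1 := hb0 _ (hdpos φ h)
    have n2 := hb1 _ (hdpos φ h)
    have n3 := hE0 φ h
    have n4 := hE1 φ h
    have n5 : ‖d1 φ‖ ≤ 4 / 3 := dG_deriv_abs r s φ hr hs hr4 (hsub φ h)
    rw [hM1, mul_comm C1]
    gcongr
  have hind := fun σ => kap_ind δ a β η j σ r s ε hε hε2 hηs
  have hkb : ∀ σ φ, ‖kap δ a β η j σ r s φ‖ ≤ M0 := by
    intro σ φ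
    rw [hind σ]
    by_cases hφ : φ ∈ Icc (Real.pi - 2 * ε) Real.pi
    · rw [Set.indicator_of_mem hφ, norm_mul, mul_comm Complex.I, Complex.norm_exp_ofReal_mul_I,
        one_mul]
      exact hAb φ hφ
    · rw [Set.indicator_of_notMem hφ, norm_zero]
      exact hM0p
  set H : ℝ → ℂ := fun φ => Complex.exp (Complex.I * (((-1) * (L * dG r s φ) : ℝ) : ℂ)) * A φ
    with hH
  have hkH : kap δ a β η j (-1) r s = Set.indicator (Icc (Real.pi - 2 * ε) Real.pi) H := hind (-1)
  have hHc : ∀ φ ∈ Icc (Real.pi - 2 * ε) Real.pi, ContinuousAt H φ := by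
    intro φ h
    have g1 := (hAd φ h).continuousAt
    have g2 := (hdd φ h).continuousAt
    refine ContinuousAt.mul ?_ g1
    refine Complex.continuous_exp.continuousAt.comp ?_
    refine continuousAt_const.mul ?_
    refine Complex.continuous_ofReal.continuousAt.comp ?_
    exact continuousAt_const.mul (continuousAt_const.mul g2)
  have hfour : ∀ ξ, FourierTransform.fourier (kap δ a β η j (-1) r s) ξ =
      ∫ x in (Real.pi - 2 * ε)..Real.pi, Complex.exp (Complex.I *
        (((-1) * (L * dG r s x) - 2 * Real.pi * ξ * x : ℝ) : ℂ)) * A x := by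
    intro ξ
    rw [Real.fourier_real_eq_integral_exp_smul, hkH,
      intervalIntegral.integral_of_le (by linarith), ← integral_Icc_eq_integral_Ioc,
      ← integral_indicator measurableSet_Icc]
    congr 1
    ext x
    by_cases hx : x ∈ Icc (Real.pi - 2 * ε) Real.pi
    · rw [Set.indicator_of_mem hx, Set.indicator_of_mem hx, hH, smul_eq_mul]
      simp only
      rw [← mul_assoc, ← Complex.exp_add]
      congr 2
      push_cast
      ring
    · rw [Set.indicator_of_notMem hx, Set.indicator_of_notMem hx, smul_zero]
  refine ⟨fun σ φ => (hkb σ φ).trans (by linarith), ?_, ?_, ?_, ?_⟩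
  · intro φ h1 h2
    rw [hkH]
    by_cases hφ : φ ∈ Icc (Real.pi - 2 * ε) Real.pi
    · have hφ' : φ ∈ Ioo (Real.pi - 2 * ε) Real.pi :=
        ⟨lt_of_le_of_ne hφ.1 (Ne.symm h1), lt_of_le_of_ne hφ.2 h2⟩
      refine (hHc φ hφ).congr ?_
      filter_upwards [isOpen_Ioo.mem_nhds hφ'] with x hx
      rw [Set.indicator_of_mem (Ioo_subset_Icc_self hx)]
    · have : (fun _ => (0 : ℂ)) =ᶠ[nhds φ] Set.indicator (Icc (Real.pi - 2 * ε) Real.pi) H := by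
        filter_upwards [isClosed_Icc.isOpen_compl.mem_nhds hφ] with x hx
        rw [Set.indicator_of_notMem hx]
      exact continuousAt_const.congr this
  · rw [hkH, ← Set.piecewise_eq_indicator]
    exact ContinuousOn.measurable_piecewise
      (fun φ h => (hHc φ h).continuousWithinAt) continuousOn_const measurableSet_Icc
  · intro ξ
    rw [hfour ξ]
    refine (intervalIntegral.norm_integral_le_of_norm_le_const (C := M0) ?_).trans ?_
    · intro x hx
      rw [uIoc_of_le (by linarith)] at hx
      rw [norm_mul, mul_comm Complex.I, Complex.norm_exp_ofReal_mul_I, one_mul]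
      exact hAb x (Ioc_subset_Icc_self hx)
    · rw [abs_of_nonneg (by linarith)]
      nlinarith
  · intro ξ
    rw [hfour ξ]
    have hμ : 0 < L * r * s / 16 := by positivity
    have hv := vdc (fun x => (-1) * (L * dG r s x) - 2 * Real.pi * ξ * x)
      (fun x => (-1) * (L * d1 x) - 2 * Real.pi * ξ) (fun x => (-1) * (L * d2 x)) A A1
      (Real.pi - 2 * ε) Real.pi (L * r * s / 16) M0 M1 (by linarith) hμ hM0p
      (fun x hx => by
        have := (((hdd x hx).const_mul L).const_mul (-1)).sub
          ((hasDerivAt_id x).const_mul (2 * Real.pi * ξ))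
        rw [mul_one] at this
        exact this)
      (fun x hx => (((hdd2 x hx).const_mul L).const_mul (-1)).sub_const _)
      (continuousOn_const.mul (continuousOn_const.mul hd2c)) hAd hA1c
      (fun x hx => by
        have := dG_deriv2_le r s x hr hs hr4 hs4 (hsub x hx)
        have h2 : L * d2 x ≤ L * (-(r * s / 16)) := mul_le_mul_of_nonneg_left this hLp.le
        show L * r * s / 16 ≤ (-1) * (L * d2 x)
        linarith) hAb hA1b
    refine hv.trans ?_
    have hq : √(L * r * s / 16) = √(L * r * s) / 4 := by
      rw [Real.sqrt_div (by positivity)]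
      congr 1
      rw [show (16 : ℝ) = 4 ^ 2 by norm_num, Real.sqrt_sq (by norm_num)]
    have hqp : 0 < √(L * r * s) := Real.sqrt_pos.mpr (by positivity)
    rw [hq, div_div_eq_mul_div]
    gcongr
    nlinarith



lemma num_aux (K L r s : ℝ) (hK : 0 < K) (hL : 0 < L) (hr : 0 < r) (hs : 0 < s)
    (hr4 : r ≤ 4 / 3) (hs4 : s ≤ 4 / 3) :
    ∃ B : ℝ, 0 < B ∧ (B = K ∨ B = K / √(L * r * s)) ∧ B ^ 2 * r ≤ 4 * K ^ 2 / (1 + L * s ^ 3) := by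
  have hp : 0 < 1 + L * s ^ 3 := by positivity
  by_cases h : L * s ^ 3 ≤ 1
  · refine ⟨K, hK, Or.inl rfl, ?_⟩
    rw [le_div_iff₀ hp]
    have : r * (1 + L * s ^ 3) ≤ 4 / 3 * 2 := by gcongr; linarith
    nlinarith [mul_le_mul_of_nonneg_left this (sq_nonneg K), sq_nonneg K]
  · push Not at h
    have hq : 0 < L * r * s := by positivity
    refine ⟨K / √(L * r * s), div_pos hK (Real.sqrt_pos.mpr hq), Or.inr rfl, ?_⟩
    rw [div_pow, Real.sq_sqrt hq.le]
    have e : K ^ 2 / (L * r * s) * r = K ^ 2 / (L * s) := by field_simp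
    rw [e, div_le_div_iff₀ (by positivity) hp]
    have h1 : s ^ 2 ≤ 16 / 9 := by nlinarith
    have h2 : 1 + L * s ^ 3 ≤ 4 * (L * s) := by
      have : L * s ^ 3 = (L * s) * s ^ 2 := by ring
      have hLs : 0 < L * s := by positivity
      nlinarith [mul_le_mul_of_nonneg_left h1 hLs.le]
    nlinarith [mul_le_mul_of_nonneg_left h2 (sq_nonneg K)]

lemma inner_bound (δ : ℝ) (a : ℝ → ℂ) (β η : ℝ → ℝ)
    (hβs : Function.support β ⊆ Set.Icc (3 / 8) (4 / 3))
    (ε : ℝ) (hε : 0 < ε) (hε2 : ε ≤ 1 / 2)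
    (hηs : Function.support η ⊆ Set.Icc (Real.pi - 2 * ε) (Real.pi + 2 * ε))
    (K : ℝ) (hK : 0 < K) (j : ℕ) (r s : ℝ) (hr : 0 < r) (hs : 0 < s)
    (hmain : r ≤ 4 / 3 → s ≤ 4 / 3 →
      (∀ σ φ, ‖kap δ a β η j σ r s φ‖ ≤ K) ∧
      (∀ φ, φ ≠ Real.pi - 2 * ε → φ ≠ Real.pi → ContinuousAt (kap δ a β η j (-1) r s) φ) ∧
      Measurable (kap δ a β η j (-1) r s) ∧
      (∀ ξ, ‖FourierTransform.fourier (kap δ a β η j (-1) r s) ξ‖ ≤ K) ∧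
      (∀ ξ, ‖FourierTransform.fourier (kap δ a β η j (-1) r s) ξ‖ ≤
        K / √((2 : ℝ) ^ (j : ℝ) * r * s)))
    (F : ℝ → ℝ → ℂ) :
    (∫⁻ θ₁ in Set.Ico (0 : ℝ) (2 * Real.pi), ‖BT δ a β η j r s F θ₁‖ₑ ^ (2 : ℝ)) *
        ENNReal.ofReal r ≤
      Set.indicator (Iic (4 / 3 : ℝ)) (fun _ =>
        ENNReal.ofReal (((2 : ℝ) ^ (-(2 * (j : ℝ)) * (3 / 2 + δ))) ^ 2 * (2 * Real.pi) *
          (K ^ 2 * (4 * K ^ 2 / (1 + (2 : ℝ) ^ (j : ℝ) * s ^ 3)))) *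
        ∫⁻ x in Icc (0 : ℝ) (2 * Real.pi), ∫⁻ y in Icc (0 : ℝ) (2 * Real.pi),
          ‖F x y‖ₑ ^ (2 : ℝ)) r := by
  by_cases hbig : 4 / 3 < r ∨ 4 / 3 < s
  · have hz : ∀ t, BT δ a β η j r s F t = 0 := by
      intro t
      rw [BT_eq]
      have h0 := fun σ φ => kap_zero δ a β η j σ r s ε hε hε2 hr hs hbig hβs hηs φ
      simp [h0]
    simp [hz]
  push Not at hbig
  obtain ⟨hr4, hs4⟩ := hbig
  obtain ⟨hkb, hkc, hkm, hF1, hF2⟩ := hmain hr4 hs4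
  rw [Set.indicator_of_mem (show r ∈ Iic (4 / 3 : ℝ) from hr4)]
  set N := ∫⁻ x in Icc (0 : ℝ) (2 * Real.pi), ∫⁻ y in Icc (0 : ℝ) (2 * Real.pi),
          ‖F x y‖ₑ ^ (2 : ℝ) with hN
  set L : ℝ := (2 : ℝ) ^ (j : ℝ) with hL
  have hLp : 0 < L := by positivity
  set Ac : ℝ := (2 : ℝ) ^ (-(2 * (j : ℝ)) * (3 / 2 + δ)) with hAc
  have hAcp : 0 < Ac := by positivity
  obtain ⟨B, hB, hBor, hBr⟩ := num_aux K L r s hK hLp hr hs hr4 hs4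
  have hBF : ∀ ξ, ‖FourierTransform.fourier (kap δ a β η j (-1) r s) ξ‖ ≤ B := by
    rcases hBor with h | h <;> rw [h]
    · exact hF1
    · exact hF2
  have hpi := Real.pi_gt_three
  have hks : ∀ x, x ∉ Icc 0 (2 * Real.pi) → kap δ a β η j (-1) r s x = 0 := by
    intro x hx
    rw [kap_ind δ a β η j (-1) r s ε hε hε2 hηs, Set.indicator_of_notMem]
    intro h
    exact hx ⟨by linarith [h.1], by linarith [h.2]⟩
  have hnm := nonmeas_aux (kap δ a β η j 1 r s) (kap δ a β η j (-1) r s) K K B hB hK hkm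
    (hkb (-1)) hks (Real.pi - 2 * ε) Real.pi hkc hBF (hkb 1) F
  have hst : ∫⁻ θ₁ in Set.Ico (0 : ℝ) (2 * Real.pi), ‖BT δ a β η j r s F θ₁‖ₑ ^ (2 : ℝ) ≤
      ENNReal.ofReal (Ac ^ 2) *
        (ENNReal.ofReal (2 * Real.pi) * (ENNReal.ofReal (K ^ 2 * B ^ 2) * N)) := by
    refine (setLIntegral_le_lintegral _ _).trans ?_
    have e : ∀ t, ‖BT δ a β η j r s F t‖ₑ ^ (2 : ℝ) = ENNReal.ofReal (Ac ^ 2) *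
        ‖∫ x in Icc (0 : ℝ) (2 * Real.pi), kap δ a β η j 1 r s (t - x) *
        ∫ y in Icc (0 : ℝ) (2 * Real.pi), kap δ a β η j (-1) r s (t - y) * F x y‖ₑ ^ (2 : ℝ) := by
      intro t
      rw [BT_eq, enorm_mul, ENNReal.mul_rpow_of_nonneg _ _ (by norm_num)]
      congr 1
      rw [← ofReal_norm, Complex.norm_real, Real.norm_eq_abs, abs_of_pos hAcp,
        ENNReal.ofReal_rpow_of_pos hAcp]
      norm_num
    simp_rw [e]
    rw [lintegral_const_mul' _ _ ENNReal.ofReal_ne_top]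
    gcongr
  calc _ ≤ ENNReal.ofReal (Ac ^ 2) *
        (ENNReal.ofReal (2 * Real.pi) * (ENNReal.ofReal (K ^ 2 * B ^ 2) * N)) *
          ENNReal.ofReal r := by gcongr
    _ = ENNReal.ofReal (Ac ^ 2) * ENNReal.ofReal (2 * Real.pi) * (ENNReal.ofReal (K ^ 2 * B ^ 2)
          * ENNReal.ofReal r) * N := by ring
    _ = ENNReal.ofReal (Ac ^ 2 * (2 * Real.pi) * (K ^ 2 * B ^ 2 * r)) * N := by
          rw [← ENNReal.ofReal_mul (by positivity), ← ENNReal.ofReal_mul (by positivity),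
            ← ENNReal.ofReal_mul (by positivity)]
    _ ≤ _ := by
          rw [mul_assoc (K ^ 2) (B ^ 2) r]
          gcongr


theorem stmt4 (δ : ℝ) (hδ : 0 ≤ δ) (a : ℝ → ℂ) (ha : IsSymbol0 a)
    (β : ℝ → ℝ) (hβ : ContDiff ℝ (⊤ : ℕ∞) β)
    (hβs : Function.support β ⊆ Set.Icc (3 / 8) (4 / 3)) :
    ∃ ε₀ : ℝ, 0 < ε₀ ∧ ∀ ε : ℝ, 0 < ε → ε ≤ ε₀ →
      ∀ η : ℝ → ℝ, ContDiff ℝ (⊤ : ℕ∞) η →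
        Function.support η ⊆ Set.Icc (Real.pi - 2 * ε) (Real.pi + 2 * ε) →
        ∃ C : ℝ≥0, ∀ (j : ℕ), 1 ≤ j → ∀ r₂ : ℝ, 0 < r₂ → ∀ F : ℝ → ℝ → ℂ,
          (∀ θ θ', F θ θ' ≠ 0 → θ ∈ Set.Icc (0 : ℝ) ε ∧ θ' ∈ Set.Icc (0 : ℝ) ε) →
          (∫⁻ r₁ in Set.Ioi (0 : ℝ),
              (∫⁻ θ₁ in Set.Ico (0 : ℝ) (2 * Real.pi),
                (‖BT δ a β η j r₁ r₂ F θ₁‖₊ : ℝ≥0∞) ^ (2 : ℝ)) *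
                ENNReal.ofReal r₁) ^ ((1 : ℝ) / 2) ≤
            (C : ℝ≥0∞) * ENNReal.ofReal ((2 : ℝ) ^ (-(2 * (j : ℝ)) * (3 / 2 + δ))) *
              ENNReal.ofReal ((1 + (2 : ℝ) ^ (j : ℝ) * r₂ ^ 3) ^ (-(1 : ℝ) / 2)) *
              (∫⁻ θ₂ in Set.Icc (0 : ℝ) (2 * Real.pi),
                ∫⁻ θ₂' in Set.Icc (0 : ℝ) (2 * Real.pi),
                  (‖F θ₂ θ₂'‖₊ : ℝ≥0∞) ^ (2 : ℝ)) ^ ((1 : ℝ) / 2) := by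
  refine ⟨1 / 2, by norm_num, fun ε hε hε2 η hη hηs => ?_⟩
  obtain ⟨K, hK, hmain⟩ := kap_main δ hδ a ha β hβ hβs ε hε hε2 η hη hηs
  set C : ℝ := √(2 * Real.pi * (4 * K ^ 4) * (4 / 3)) with hC
  have hCsq : C ^ 2 = 2 * Real.pi * (4 * K ^ 4) * (4 / 3) := Real.sq_sqrt (by positivity)
  have hC0 : 0 ≤ C := Real.sqrt_nonneg _
  refine ⟨C.toNNReal, fun j _ s hs F _ => ?_⟩
  set Ac : ℝ := (2 : ℝ) ^ (-(2 * (j : ℝ)) * (3 / 2 + δ)) with hAc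
  have hAcp : 0 < Ac := by positivity
  set P : ℝ := 1 + (2 : ℝ) ^ (j : ℝ) * s ^ 3 with hP
  have hPp : 0 < P := by positivity
  set w : ℝ := P ^ (-(1 : ℝ) / 2) with hw
  have hwp : 0 < w := by positivity
  have hwsq : w ^ 2 = 1 / P := by
    rw [hw, ← Real.rpow_natCast, ← Real.rpow_mul hPp.le]
    norm_num [Real.rpow_neg_one]
  set N := ∫⁻ x in Icc (0 : ℝ) (2 * Real.pi), ∫⁻ y in Icc (0 : ℝ) (2 * Real.pi),
          (‖F x y‖₊ : ℝ≥0∞) ^ (2 : ℝ) with hN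
  have hb : (∫⁻ r₁ in Set.Ioi (0 : ℝ),
              (∫⁻ θ₁ in Set.Ico (0 : ℝ) (2 * Real.pi),
                (‖BT δ a β η j r₁ s F θ₁‖₊ : ℝ≥0∞) ^ (2 : ℝ)) *
                ENNReal.ofReal r₁) ≤ ENNReal.ofReal ((C * Ac * w) ^ 2) * N := by
    calc _ ≤ ∫⁻ r in Set.Ioi (0 : ℝ), Set.indicator (Iic (4 / 3 : ℝ)) (fun _ =>
        ENNReal.ofReal (Ac ^ 2 * (2 * Real.pi) * (K ^ 2 * (4 * K ^ 2 / P))) * N) r := by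
          refine setLIntegral_mono' measurableSet_Ioi fun r hr => ?_
          exact inner_bound δ a β η hβs ε hε hε2 hηs K hK j r s hr hs (hmain j r s hr hs) F
      _ = ENNReal.ofReal (Ac ^ 2 * (2 * Real.pi) * (K ^ 2 * (4 * K ^ 2 / P))) * N *
            ENNReal.ofReal (4 / 3) := by
          rw [lintegral_indicator measurableSet_Iic, lintegral_const,
            Measure.restrict_restrict measurableSet_Iic, Measure.restrict_apply_univ,
            Set.inter_comm, Set.Ioi_inter_Iic, Real.volume_Ioc, sub_zero]
      _ = ENNReal.ofReal (Ac ^ 2 * (2 * Real.pi) * (K ^ 2 * (4 * K ^ 2 / P)) * (4 / 3)) * N := by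
          rw [mul_right_comm, ← ENNReal.ofReal_mul (by positivity)]
      _ ≤ _ := by
          gcongr
          rw [mul_pow, mul_pow, hCsq, hwsq]
          apply le_of_eq
          ring
  calc _ ≤ (ENNReal.ofReal ((C * Ac * w) ^ 2) * N) ^ ((1 : ℝ) / 2) :=
        ENNReal.rpow_le_rpow hb (by norm_num)
    _ = ENNReal.ofReal (C * Ac * w) * N ^ ((1 : ℝ) / 2) := by
        rw [ENNReal.mul_rpow_of_nonneg _ _ (by norm_num),
          ENNReal.ofReal_rpow_of_nonneg (by positivity) (by norm_num),
          ← Real.sqrt_eq_rpow, Real.sqrt_sq (by positivity)]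
    _ = _ := by
        rw [ENNReal.ofReal_mul (by positivity), ENNReal.ofReal_mul (by positivity)]
        rfl

end
end

section
/- Fix δ ≥ 0, a symbol a of order 0, the bump β, and α ∈ (−1,1)∖{0}. For j ≥ 1, r₁, r₂ > 0 and θ₁, θ₂ ∈ [0,2π) set ψ₁(s) = (2^{−j}+d_s)^{−3/2−δ} a(2^j d_s) e^{−|α|s} and ψ₂(s) = (2^{−j}+d_s)^{−3/2−δ} a(2^j d_s) · [(e^{−s} − cos(θ₁−θ₂+π)) sinh(αs)] / [cosh s − cos(θ₁−θ₂+π)], and define K̃^{ℓ,j}(r₁,r₂;θ₁−θ₂) = 2^{−j(3/2+δ)} β(r₁+r₂) ∫₀^∞ e^{i 2^j d_s} ψ_ℓ(s) ds for ℓ = 1, 2. Then there is a constant C, independent of j, r₁, r₂, θ₁, θ₂, such that |K̃^{1,j}(r₁,r₂;θ₁−θ₂)| + |K̃^{2,j}(r₁,r₂;θ₁−θ₂)| ≤ C 2^{−j(3/2+δ)} (1 + 2^j r₁ r₂)^{−1/2} for all j ≥ 1. -/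
open MeasureTheory Real Set

noncomputable section

/-- `d_s(r₁, r₂) = √(r₁² + r₂² + 2 r₁ r₂ cosh s)`. -/
def dS (r₁ r₂ s : ℝ) : ℝ := Real.sqrt (r₁ ^ 2 + r₂ ^ 2 + 2 * r₁ * r₂ * Real.cosh s)

/-- `ψ₁(s) = (2^{-j}+d_s)^{-3/2-δ} a(2^j d_s) e^{-|α|s}`. -/
def psi1 (δ α : ℝ) (a : ℝ → ℂ) (j : ℕ) (r₁ r₂ s : ℝ) : ℂ :=
  ((((2 : ℝ) ^ (-(j : ℝ)) + dS r₁ r₂ s) ^ (-(3 / 2 + δ)) : ℝ) : ℂ) *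
    a ((2 : ℝ) ^ (j : ℝ) * dS r₁ r₂ s) * ((Real.exp (-(|α|) * s) : ℝ) : ℂ)

/-- `ψ₂(s)`, with `φ = θ₁ - θ₂`. -/
def psi2 (δ α : ℝ) (a : ℝ → ℂ) (j : ℕ) (r₁ r₂ φ s : ℝ) : ℂ :=
  ((((2 : ℝ) ^ (-(j : ℝ)) + dS r₁ r₂ s) ^ (-(3 / 2 + δ)) : ℝ) : ℂ) *
    a ((2 : ℝ) ^ (j : ℝ) * dS r₁ r₂ s) *
    ((((Real.exp (-s) - Real.cos (φ + Real.pi)) * Real.sinh (α * s)) /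
        (Real.cosh s - Real.cos (φ + Real.pi)) : ℝ) : ℂ)

/-- The kernel `K̃^{1,j}`. -/
def Ktil1 (δ α : ℝ) (a : ℝ → ℂ) (β : ℝ → ℝ) (j : ℕ) (r₁ r₂ : ℝ) : ℂ :=
  (((2 : ℝ) ^ (-(j : ℝ) * (3 / 2 + δ)) : ℝ) : ℂ) * ((β (r₁ + r₂) : ℝ) : ℂ) *
    ∫ s in Set.Ioi (0 : ℝ),
      Complex.exp (Complex.I * (((2 : ℝ) ^ (j : ℝ) * dS r₁ r₂ s : ℝ) : ℂ)) *
        psi1 δ α a j r₁ r₂ s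

/-- The kernel `K̃^{2,j}`, with `φ = θ₁ - θ₂`. -/
def Ktil2 (δ α : ℝ) (a : ℝ → ℂ) (β : ℝ → ℝ) (j : ℕ) (r₁ r₂ φ : ℝ) : ℂ :=
  (((2 : ℝ) ^ (-(j : ℝ) * (3 / 2 + δ)) : ℝ) : ℂ) * ((β (r₁ + r₂) : ℝ) : ℂ) *
    ∫ s in Set.Ioi (0 : ℝ),
      Complex.exp (Complex.I * (((2 : ℝ) ^ (j : ℝ) * dS r₁ r₂ s : ℝ) : ℂ)) *
        psi2 δ α a j r₁ r₂ φ s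

lemma tendsto_sinh_top : Filter.Tendsto Real.sinh Filter.atTop Filter.atTop := by
  refine Filter.tendsto_atTop_mono' _ ?_ Filter.tendsto_id
  filter_upwards [Filter.eventually_ge_atTop (0 : ℝ)] with x hx
  exact Real.self_le_sinh_iff.2 hx

lemma coth_hasDeriv (s : ℝ) (hs : 0 < s) :
    HasDerivAt (fun s => -(Real.sinh s)⁻¹) (Real.cosh s / Real.sinh s ^ 2) s := by
  have h := (Real.hasDerivAt_sinh s).inv (Real.sinh_pos_iff.2 hs).ne'
  exact h.neg.congr_deriv (by ring)

lemma tendsto_inv_sinh : Filter.Tendsto (fun s => -(Real.sinh s)⁻¹) Filter.atTop (nhds 0) := by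
  have := tendsto_sinh_top.inv_tendsto_atTop.neg
  simpa using this

lemma csch_integrable (s₀ : ℝ) (hs : 0 < s₀) :
    IntegrableOn (fun s => Real.cosh s / Real.sinh s ^ 2) (Ioi s₀) := by
  refine integrableOn_Ioi_deriv_of_nonneg' (g := fun s => -(Real.sinh s)⁻¹) (l := 0) ?_ ?_
    tendsto_inv_sinh
  · intro x hx
    exact coth_hasDeriv x (lt_of_lt_of_le hs hx)
  · intro x hx
    have := Real.cosh_pos x
    positivity

lemma csch_integral (s₀ : ℝ) (hs : 0 < s₀) :
    ∫ s in Ioi s₀, Real.cosh s / Real.sinh s ^ 2 = (Real.sinh s₀)⁻¹ := by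
  rw [integral_Ioi_of_hasDerivAt_of_nonneg' (g := fun s => -(Real.sinh s)⁻¹) (l := 0) _ _
    tendsto_inv_sinh]
  · ring
  · intro x hx
    exact coth_hasDeriv x (lt_of_lt_of_le hs hx)
  · intro x hx
    have := Real.cosh_pos x
    positivity

lemma norm_phase (x : ℝ) : ‖Complex.exp (Complex.I * (x : ℂ))‖ = 1 := by
  rw [mul_comm]; exact Complex.norm_exp_ofReal_mul_I x

section osc
variable {A B κ lam p : ℝ} {d g g' : ℝ → ℝ} {Q Q' : ℝ → ℂ}

lemma osc_norm (hA : 0 ≤ A) (hB : 0 ≤ B)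
    (hd0 : ∀ s > 0, 3 / 8 ≤ d s)
    (hQb : ∀ s > 0, ‖Q s‖ ≤ A)
    (hgb : ∀ s > 0, |g s| ≤ B * Real.exp (-κ * s)) (s : ℝ) (hs : 0 < s) :
    ‖Complex.exp (Complex.I * ((lam * d s : ℝ) : ℂ)) * (Q s / (d s : ℂ) * (g s : ℂ))‖ ≤
      A * (8 / 3) * (B * Real.exp (-κ * s)) := by
  have h1 := hd0 s hs
  rw [norm_mul, norm_phase, one_mul, norm_mul, norm_div, Complex.norm_real, Complex.norm_real,
    Real.norm_eq_abs, Real.norm_eq_abs, abs_of_pos (by linarith : 0 < d s)]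
  have : ‖Q s‖ / d s ≤ A * (8 / 3) := by
    rw [div_le_iff₀ (by linarith)]
    nlinarith [hQb s hs]
  exact mul_le_mul this (hgb s hs) (abs_nonneg _) (by positivity)

lemma osc_integrable (hA : 0 ≤ A) (hB : 0 ≤ B) (hκ : 0 < κ)
    (hd : ∀ s > 0, HasDerivAt d (p * Real.sinh s / d s) s) (hd0 : ∀ s > 0, 3 / 8 ≤ d s)
    (hQ : ∀ s > 0, HasDerivAt Q (Q' s) s) (hQb : ∀ s > 0, ‖Q s‖ ≤ A)
    (hg : ∀ s > 0, HasDerivAt g (g' s) s)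
    (hgb : ∀ s > 0, |g s| ≤ B * Real.exp (-κ * s)) :
    IntegrableOn (fun s => Complex.exp (Complex.I * ((lam * d s : ℝ) : ℂ)) *
      (Q s / (d s : ℂ) * (g s : ℂ))) (Ioi 0) := by
  have hint : IntegrableOn (fun s => A * (8 / 3) * (B * Real.exp (-κ * s))) (Ioi 0) :=
    ((integrableOn_exp_mul_Ioi (by linarith : -κ < 0) 0).const_mul B).const_mul _
  refine Integrable.mono' hint ?_ ?_
  · apply ContinuousOn.aestronglyMeasurable _ measurableSet_Ioi
    intro s hs
    have h1 := (hd s hs).continuousAt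
    have h2 := (hg s hs).continuousAt
    have h3 := (hQ s hs).continuousAt
    have h4 : (d s : ℂ) ≠ 0 := by
      have := hd0 s hs
      exact_mod_cast (by linarith : 0 < d s).ne'
    apply ContinuousAt.continuousWithinAt
    have h5 : ContinuousAt (fun s => (d s : ℂ)) s :=
      Complex.continuous_ofReal.continuousAt.comp h1
    have h6 : ContinuousAt (fun s => (g s : ℂ)) s :=
      Complex.continuous_ofReal.continuousAt.comp h2
    have h7 : ContinuousAt (fun s => ((lam * d s : ℝ) : ℂ)) s :=
      Complex.continuous_ofReal.continuousAt.comp (continuousAt_const.mul h1)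
    exact (continuousAt_const.mul h7).cexp.mul ((h3.div h5 h4).mul h6)
  · refine (ae_restrict_iff' measurableSet_Ioi).2 (Filter.Eventually.of_forall fun s hs => ?_)
    exact osc_norm hA hB hd0 hQb hgb s hs

lemma osc_far (hA : 0 ≤ A) (hB : 0 ≤ B) (hκ : 0 < κ) (hl : 0 < lam) (hp : 0 < p)
    (hd : ∀ s > 0, HasDerivAt d (p * Real.sinh s / d s) s) (hd0 : ∀ s > 0, 3 / 8 ≤ d s)
    (hQ : ∀ s > 0, HasDerivAt Q (Q' s) s) (hQb : ∀ s > 0, ‖Q s‖ ≤ A)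
    (hQb' : ∀ s > 0, ‖Q' s‖ ≤ A)
    (hg : ∀ s > 0, HasDerivAt g (g' s) s)
    (hgb : ∀ s > 0, |g s| ≤ B * Real.exp (-κ * s))
    (hgb' : ∀ s > 0, |g' s| * Real.sinh s ≤ B * Real.cosh s) (s₀ : ℝ) (hs₀ : 0 < s₀) :
    ‖∫ s in Ioi s₀, Complex.exp (Complex.I * ((lam * d s : ℝ) : ℂ)) *
      (Q s / (d s : ℂ) * (g s : ℂ))‖ ≤ 4 * (A * B) / (lam * p * Real.sinh s₀) := by
  set E : ℝ → ℂ := fun s => Complex.exp (Complex.I * ((lam * d s : ℝ) : ℂ)) with hE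
  have hgB : ∀ s > 0, |g s| ≤ B := fun s hs => (hgb s hs).trans (by
    have : Real.exp (-κ * s) ≤ 1 := Real.exp_le_one_iff.2 (by nlinarith)
    nlinarith)
  set G : ℝ → ℂ := fun s => Q s * (g s : ℂ) / (Real.sinh s : ℂ) with hG
  have hGd : ∀ s > 0, HasDerivAt G (((Q' s * g s + Q s * g' s) * (Real.sinh s : ℂ)
      - Q s * g s * (Real.cosh s : ℂ)) / (Real.sinh s : ℂ) ^ 2) s := by
    intro s hs
    have hsh : (Real.sinh s : ℂ) ≠ 0 := by exact_mod_cast (Real.sinh_pos_iff.2 hs).ne'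
    exact ((hQ s hs).mul (hg s hs).ofReal_comp).div (Real.hasDerivAt_sinh s).ofReal_comp hsh
  have hGb : ∀ s > 0, ‖deriv G s‖ ≤ 3 * (A * B) * (Real.cosh s / Real.sinh s ^ 2) := by
    intro s hs
    have hsh := Real.sinh_pos_iff.2 hs
    have hch := Real.cosh_pos s
    have hlt := Real.sinh_lt_cosh s
    rw [(hGd s hs).deriv, norm_div, norm_pow, Complex.norm_real, Real.norm_eq_abs,
      abs_of_pos hsh, mul_div_assoc']
    gcongr
    have a1 : ‖Q' s‖ * |g s| * Real.sinh s ≤ A * B * Real.cosh s := by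
      have := hQb' s hs
      have := hgB s hs
      gcongr
    have a2 : ‖Q s‖ * (|g' s| * Real.sinh s) ≤ A * (B * Real.cosh s) := by
      have := hQb s hs
      have := hgb' s hs
      gcongr
    have a3 : ‖Q s‖ * |g s| * Real.cosh s ≤ A * B * Real.cosh s := by
      have := hQb s hs
      have := hgB s hs
      gcongr
    calc _ ≤ ‖(Q' s * g s + Q s * g' s) * (Real.sinh s : ℂ)‖ +
          ‖Q s * g s * (Real.cosh s : ℂ)‖ := norm_sub_le _ _
      _ ≤ (‖Q' s‖ * |g s| + ‖Q s‖ * |g' s|) * Real.sinh s + ‖Q s‖ * |g s| * Real.cosh s := by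
          rw [norm_mul, norm_mul, norm_mul, Complex.norm_real, Complex.norm_real,
            Complex.norm_real, Real.norm_eq_abs, Real.norm_eq_abs, Real.norm_eq_abs,
            abs_of_pos hsh, abs_of_pos hch]
          gcongr
          refine (norm_add_le _ _).trans (le_of_eq ?_)
          rw [norm_mul, norm_mul, Complex.norm_real, Complex.norm_real, Real.norm_eq_abs,
            Real.norm_eq_abs]
      _ ≤ _ := by nlinarith
  have hEn : ∀ s, ‖E s‖ = 1 := fun s => norm_phase _
  have hEd : ∀ s > 0, HasDerivAt E (E s * (Complex.I *
      ((lam * (p * Real.sinh s / d s) : ℝ) : ℂ))) s := fun s hs =>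
    ((((hd s hs).const_mul lam).ofReal_comp).const_mul Complex.I).cexp
  set c : ℂ := Complex.I * ((lam * p : ℝ) : ℂ) with hc
  have hcn : ‖c‖ = lam * p := by
    rw [hc, norm_mul, Complex.norm_I, one_mul, Complex.norm_real, Real.norm_eq_abs,
      abs_of_pos (by positivity)]
  have hc0 : c ≠ 0 := by
    rw [← norm_pos_iff, hcn]; positivity
  set W : ℝ → ℂ := fun s => E s * G s / c with hW
  set f : ℝ → ℂ := fun s => E s * (Q s / (d s : ℂ) * (g s : ℂ)) with hf
  set k : ℝ → ℂ := fun s => E s * deriv G s / c with hk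
  have hWd : ∀ s > 0, HasDerivAt W (f s + k s) s := by
    intro s hs
    have h := ((hEd s hs).mul ((hGd s hs).differentiableAt.hasDerivAt)).div_const c
    refine h.congr_deriv (Eq.symm ?_)
    change E s * (Q s / (d s : ℂ) * (g s : ℂ)) + E s * deriv G s / c =
      (E s * (Complex.I * ((lam * (p * Real.sinh s / d s) : ℝ) : ℂ)) *
        (Q s * (g s : ℂ) / (Real.sinh s : ℂ)) + E s * deriv G s) / c
    have hsh : (Real.sinh s : ℂ) ≠ 0 := by exact_mod_cast (Real.sinh_pos_iff.2 hs).ne'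
    have h4 : (d s : ℂ) ≠ 0 := by
      have := hd0 s hs
      exact_mod_cast (by linarith : 0 < d s).ne'
    have hl' : (lam : ℂ) ≠ 0 := by exact_mod_cast hl.ne'
    have hp' : (p : ℂ) ≠ 0 := by exact_mod_cast hp.ne'
    rw [add_div]
    congr 1
    rw [hc]
    push_cast
    push_cast at hsh
    field_simp
  have hsub : Ioi s₀ ⊆ Ioi (0 : ℝ) := Ioi_subset_Ioi hs₀.le
  have hfi : IntegrableOn f (Ioi s₀) :=
    (osc_integrable hA hB hκ hd hd0 hQ hQb hg hgb).mono_set hsub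
  have hkn : ∀ s > 0, ‖k s‖ ≤ 3 * (A * B) / (lam * p) * (Real.cosh s / Real.sinh s ^ 2) := by
    intro s hs
    simp only [hk]
    rw [norm_div, norm_mul, hEn, one_mul, hcn, div_mul_eq_mul_div]
    gcongr
    exact hGb s hs
  have hkae : ∀ᵐ s ∂(volume.restrict (Ioi s₀)),
      ‖k s‖ ≤ 3 * (A * B) / (lam * p) * (Real.cosh s / Real.sinh s ^ 2) :=
    (ae_restrict_iff' measurableSet_Ioi).2 (Filter.Eventually.of_forall fun s hs =>
      hkn s (hsub hs))
  have hdom := (csch_integrable s₀ hs₀).const_mul (3 * (A * B) / (lam * p))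
  have hki : IntegrableOn k (Ioi s₀) := by
    refine Integrable.mono' hdom ?_ hkae
    have h1 : AEStronglyMeasurable E (volume.restrict (Ioi s₀)) := by
      apply ContinuousOn.aestronglyMeasurable _ measurableSet_Ioi
      intro s hs
      exact (hEd s (hsub hs)).continuousAt.continuousWithinAt
    simp only [hk, div_eq_mul_inv]
    exact (h1.mul (aestronglyMeasurable_deriv G _)).mul_const _
  have hWn : ∀ s > 0, ‖W s‖ ≤ A * B / (lam * p) * (Real.sinh s)⁻¹ := by
    intro s hs
    have hsh := Real.sinh_pos_iff.2 hs
    simp only [hW, hG]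
    rw [norm_div, norm_mul, hEn, one_mul, hcn, norm_div, norm_mul, Complex.norm_real,
      Complex.norm_real, Real.norm_eq_abs, Real.norm_eq_abs, abs_of_pos hsh]
    have := hQb s hs
    have := hgB s hs
    calc ‖Q s‖ * |g s| / Real.sinh s / (lam * p) ≤ A * B / Real.sinh s / (lam * p) := by gcongr
      _ = _ := by field_simp
  have hW0 : Filter.Tendsto W Filter.atTop (nhds 0) := by
    have h1 : Filter.Tendsto (fun s => A * B / (lam * p) * (Real.sinh s)⁻¹) Filter.atTop
        (nhds 0) := by
      simpa using tendsto_sinh_top.inv_tendsto_atTop.const_mul (A * B / (lam * p))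
    refine squeeze_zero_norm' ?_ h1
    filter_upwards [Filter.eventually_gt_atTop (0 : ℝ)] with s hs using hWn s hs
  have hmain := integral_Ioi_of_hasDerivAt_of_tendsto (f := W) (f' := fun s => f s + k s)
    (a := s₀) (m := 0) (hWd s₀ hs₀).continuousAt.continuousWithinAt
    (fun x hx => hWd x (hsub hx)) (hfi.add hki) hW0
  rw [integral_add hfi hki] at hmain
  have hkint : ‖∫ s in Ioi s₀, k s‖ ≤ 3 * (A * B) / (lam * p) * (Real.sinh s₀)⁻¹ := by
    refine (norm_integral_le_of_norm_le hdom hkae).trans (le_of_eq ?_)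
    rw [integral_const_mul, csch_integral s₀ hs₀]
  have : ∫ s in Ioi s₀, f s = -W s₀ - ∫ s in Ioi s₀, k s := by
    rw [eq_sub_iff_add_eq, hmain, zero_sub]
  rw [this]
  calc _ ≤ ‖-W s₀‖ + ‖∫ s in Ioi s₀, k s‖ := norm_sub_le _ _
    _ ≤ A * B / (lam * p) * (Real.sinh s₀)⁻¹ + 3 * (A * B) / (lam * p) * (Real.sinh s₀)⁻¹ := by
      rw [norm_neg]; exact add_le_add (hWn s₀ hs₀) hkint
    _ = _ := by
      have := (Real.sinh_pos_iff.2 hs₀).ne'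
      field_simp
      ring

lemma osc (hA : 0 ≤ A) (hB : 0 ≤ B) (hκ : 0 < κ) (hl : 0 < lam) (hp : 0 < p)
    (hd : ∀ s > 0, HasDerivAt d (p * Real.sinh s / d s) s) (hd0 : ∀ s > 0, 3 / 8 ≤ d s)
    (hQ : ∀ s > 0, HasDerivAt Q (Q' s) s) (hQb : ∀ s > 0, ‖Q s‖ ≤ A)
    (hQb' : ∀ s > 0, ‖Q' s‖ ≤ A)
    (hg : ∀ s > 0, HasDerivAt g (g' s) s)
    (hgb : ∀ s > 0, |g s| ≤ B * Real.exp (-κ * s))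
    (hgb' : ∀ s > 0, |g' s| * Real.sinh s ≤ B * Real.cosh s) :
    ‖∫ s in Ioi (0 : ℝ), Complex.exp (Complex.I * ((lam * d s : ℝ) : ℂ)) *
      (Q s / (d s : ℂ) * (g s : ℂ))‖ ≤
      (2 * (A * (8 / 3) * B / κ + (A * (8 / 3) * B + 4 * (A * B)))) *
        (1 + lam * p) ^ (-(1 : ℝ) / 2) := by
  have hX : 0 < lam * p := by positivity
  have hAB : 0 ≤ A * B := by positivity
  have hABk : 0 ≤ A * (8 / 3) * B / κ := by positivity
  have hpow : (1 + lam * p) ^ (-(1 : ℝ) / 2) = (√(1 + lam * p))⁻¹ := by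
    rw [Real.sqrt_eq_rpow, ← Real.rpow_neg (by positivity)]
    norm_num
  rw [hpow]
  have hfi : IntegrableOn (fun s => Complex.exp (Complex.I * ((lam * d s : ℝ) : ℂ)) *
      (Q s / (d s : ℂ) * (g s : ℂ))) (Ioi 0) := osc_integrable hA hB hκ hd hd0 hQ hQb hg hgb
  rcases le_or_gt (lam * p) 1 with h1 | h1
  · have hint : IntegrableOn (fun s => A * (8 / 3) * (B * Real.exp (-κ * s))) (Ioi 0) :=
      ((integrableOn_exp_mul_Ioi (by linarith : -κ < 0) 0).const_mul B).const_mul _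
    have hb := norm_integral_le_of_norm_le hint
      ((ae_restrict_iff' measurableSet_Ioi).2 (Filter.Eventually.of_forall fun s hs =>
        osc_norm (lam := lam) hA hB hd0 hQb hgb s hs))
    rw [integral_const_mul, integral_const_mul, integral_exp_mul_Ioi (by linarith)] at hb
    refine hb.trans ?_
    have hs : √(1 + lam * p) ≤ 2 := by
      rw [Real.sqrt_le_left (by norm_num)]; linarith
    have hs' : (2 : ℝ)⁻¹ ≤ (√(1 + lam * p))⁻¹ :=
      inv_anti₀ (by positivity) hs
    calc _ = A * (8 / 3) * B / κ := by
            simp; field_simp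
      _ ≤ 2 * (A * (8 / 3) * B / κ + (A * (8 / 3) * B + 4 * (A * B))) * 2⁻¹ := by nlinarith
      _ ≤ _ := by gcongr
  · set s₀ := (√(lam * p))⁻¹ with hs₀
    have hs₀p : 0 < s₀ := by positivity
    have hu : Ioi (0 : ℝ) = Ioc 0 s₀ ∪ Ioi s₀ := (Ioc_union_Ioi_eq_Ioi hs₀p.le).symm
    have hdisj : Disjoint (Ioc 0 s₀) (Ioi s₀) :=
      Set.disjoint_left.2 fun x hx hx' => not_lt.2 hx.2 hx'
    rw [hu, setIntegral_union hdisj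
      measurableSet_Ioi (hfi.mono_set Ioc_subset_Ioi_self)
      (hfi.mono_set (Ioi_subset_Ioi hs₀p.le))]
    have hfar := osc_far hA hB hκ hl hp hd hd0 hQ hQb hQb' hg hgb hgb' s₀ hs₀p
    have hnear : ‖∫ s in Ioc 0 s₀, Complex.exp (Complex.I * ((lam * d s : ℝ) : ℂ)) *
      (Q s / (d s : ℂ) * (g s : ℂ))‖ ≤ A * (8 / 3) * B * s₀ := by
      have := norm_setIntegral_le_of_norm_le_const (μ := volume) (s := Ioc 0 s₀)
        (f := fun s => Complex.exp (Complex.I * ((lam * d s : ℝ) : ℂ)) *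
          (Q s / (d s : ℂ) * (g s : ℂ))) (C := A * (8 / 3) * B) (by simp) (by
          intro s hs
          refine (osc_norm hA hB hd0 hQb hgb s hs.1).trans ?_
          have : Real.exp (-κ * s) ≤ 1 := Real.exp_le_one_iff.2 (by nlinarith [hs.1])
          rw [mul_assoc (A * (8 / 3)) B 1 |>.symm.trans (mul_one _) |>.symm]
          gcongr)
      simpa [hs₀p.le] using this
    have hXs : lam * p * s₀ * s₀ = 1 := by
      have := Real.mul_self_sqrt hX.le
      have h0 : √(lam * p) ≠ 0 := by positivity
      rw [hs₀]; field_simp; nlinarith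
    have hfar2 : 4 * (A * B) / (lam * p * Real.sinh s₀) ≤ 4 * (A * B) * s₀ := by
      rw [div_le_iff₀ (by have := Real.sinh_pos_iff.2 hs₀p; positivity)]
      have h2 : s₀ ≤ Real.sinh s₀ := Real.self_le_sinh_iff.2 hs₀p.le
      have h3 : 1 ≤ s₀ * (lam * p * Real.sinh s₀) := by
        calc 1 = lam * p * s₀ * s₀ := hXs.symm
          _ = s₀ * (lam * p * s₀) := by ring
          _ ≤ _ := by gcongr
      nlinarith
    have hcmp : s₀ ≤ 2 * (√(1 + lam * p))⁻¹ := by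
      have : √(1 + lam * p) ≤ 2 * √(lam * p) := by
        rw [Real.sqrt_le_left (by positivity), mul_pow, Real.sq_sqrt hX.le]
        linarith
      rw [hs₀, ← div_eq_mul_inv, le_div_iff₀ (by positivity), inv_mul_le_iff₀ (by positivity)]
      linarith
    refine (norm_add_le _ _).trans ?_
    have hD : 0 ≤ A * (8 / 3) * B := by positivity
    calc _ ≤ A * (8 / 3) * B * s₀ + 4 * (A * B) * s₀ := add_le_add hnear (hfar.trans hfar2)
      _ ≤ (A * (8 / 3) * B / κ + (A * (8 / 3) * B + 4 * (A * B))) * s₀ := by nlinarith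
      _ ≤ (A * (8 / 3) * B / κ + (A * (8 / 3) * B + 4 * (A * B))) * (2 * (√(1 + lam * p))⁻¹) := by
        gcongr
      _ = _ := by ring

end osc

lemma gtwo_num (c s : ℝ) (hc1 : -1 ≤ c) (hc2 : c ≤ 1) (hs : 0 < s) :
    |Real.exp (-s) - c| * Real.sinh s ≤ 4 * (Real.cosh s - c) := by
  have hsh := Real.sinh_pos_iff.2 hs
  have hlt := Real.sinh_lt_cosh s
  have hch : 1 ≤ Real.cosh s := Real.one_le_cosh s
  have he : Real.exp (-s) ≤ 1 := Real.exp_le_one_iff.2 (by linarith)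
  have he0 := Real.exp_pos (-s)
  have h1 : |Real.exp (-s) - c| ≤ (1 - Real.exp (-s)) + (1 - c) := by
    rw [abs_le]; constructor <;> linarith
  have hid : Real.exp s * Real.exp (-s) = 1 := by rw [← Real.exp_add]; simp
  have h2 : (1 - Real.exp (-s)) * Real.sinh s ≤ 2 * (Real.cosh s - 1) := by
    have : (1 - Real.exp (-s)) * Real.sinh s = (1 + Real.exp (-s)) * (Real.cosh s - 1) := by
      rw [Real.sinh_eq, Real.cosh_eq]
      linear_combination -hid
    rw [this]
    nlinarith
  have h3 : (1 - c) * Real.sinh s ≤ 2 * (Real.cosh s - c) := by nlinarith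
  calc _ ≤ ((1 - Real.exp (-s)) + (1 - c)) * Real.sinh s := by gcongr
    _ ≤ _ := by nlinarith

lemma abs_sinh_le (α s : ℝ) (hα : |α| < 1) (hs : 0 < s) :
    |Real.sinh (α * s)| ≤ Real.exp (-(1 - |α|) * s) * Real.sinh s := by
  rw [Real.abs_sinh, abs_mul, abs_of_pos hs, Real.sinh_eq, Real.sinh_eq]
  have h1 : Real.exp (-(1 - |α|) * s) * Real.exp s = Real.exp (|α| * s) := by
    rw [← Real.exp_add]; congr 1; ring
  have h2 : Real.exp (-(1 - |α|) * s) * Real.exp (-s) ≤ Real.exp (-(|α| * s)) := by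
    rw [← Real.exp_add]; apply Real.exp_le_exp.2; nlinarith
  nlinarith

lemma gtwo_bound (α c s : ℝ) (hα : |α| < 1) (hc1 : -1 ≤ c) (hc2 : c ≤ 1) (hs : 0 < s) :
    |(Real.exp (-s) - c) * Real.sinh (α * s) / (Real.cosh s - c)| ≤
      14 * Real.exp (-(1 - |α|) * s) := by
  have hch : 1 < Real.cosh s := Real.one_lt_cosh.2 hs.ne'
  have hD : 0 < Real.cosh s - c := by linarith
  have h1 := gtwo_num c s hc1 hc2 hs
  have h2 := abs_sinh_le α s hα hs
  have he := Real.exp_pos (-(1 - |α|) * s)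
  rw [abs_div, abs_mul, abs_of_pos hD, div_le_iff₀ hD]
  calc _ ≤ |Real.exp (-s) - c| * (Real.exp (-(1 - |α|) * s) * Real.sinh s) := by gcongr
    _ = Real.exp (-(1 - |α|) * s) * (|Real.exp (-s) - c| * Real.sinh s) := by ring
    _ ≤ Real.exp (-(1 - |α|) * s) * (4 * (Real.cosh s - c)) := by gcongr
    _ ≤ _ := by nlinarith [mul_pos he hD]

lemma gtwo_deriv (α c s : ℝ) (hc2 : c ≤ 1) (hs : 0 < s) :
    HasDerivAt (fun s => (Real.exp (-s) - c) * Real.sinh (α * s) / (Real.cosh s - c))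
      (((-Real.exp (-s) * Real.sinh (α * s) +
        (Real.exp (-s) - c) * (Real.cosh (α * s) * α)) * (Real.cosh s - c) -
        (Real.exp (-s) - c) * Real.sinh (α * s) * Real.sinh s) / (Real.cosh s - c) ^ 2) s := by
  have hch : 1 < Real.cosh s := Real.one_lt_cosh.2 hs.ne'
  have hD : Real.cosh s - c ≠ 0 := by linarith
  have h1 : HasDerivAt (fun s => Real.exp (-s) - c) (-Real.exp (-s)) s :=
    (((hasDerivAt_neg s).exp).sub_const c).congr_deriv (by ring)
  have h2 : HasDerivAt (fun s => Real.sinh (α * s)) (Real.cosh (α * s) * α) s :=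
    (((hasDerivAt_id s).const_mul α).sinh).congr_deriv (by simp)
  exact (h1.mul h2).div ((Real.hasDerivAt_cosh s).sub_const c) hD

lemma gtwo_deriv_bound (α c s : ℝ) (hα : |α| < 1) (hc1 : -1 ≤ c) (hc2 : c ≤ 1) (hs : 0 < s) :
    |((-Real.exp (-s) * Real.sinh (α * s) +
        (Real.exp (-s) - c) * (Real.cosh (α * s) * α)) * (Real.cosh s - c) -
        (Real.exp (-s) - c) * Real.sinh (α * s) * Real.sinh s) / (Real.cosh s - c) ^ 2| *
      Real.sinh s ≤ 14 * Real.cosh s := by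
  have hch : 1 < Real.cosh s := Real.one_lt_cosh.2 hs.ne'
  have hsh := Real.sinh_pos_iff.2 hs
  have hD : 0 < Real.cosh s - c := by linarith
  have hN := gtwo_num c s hc1 hc2 hs
  have hS : |Real.sinh (α * s)| ≤ Real.sinh s := by
    refine (abs_sinh_le α s hα hs).trans ?_
    have : Real.exp (-(1 - |α|) * s) ≤ 1 := Real.exp_le_one_iff.2 (by nlinarith)
    nlinarith
  have hC : |Real.cosh (α * s) * α| ≤ Real.cosh s := by
    rw [abs_mul, abs_of_pos (Real.cosh_pos _)]
    have : Real.cosh (α * s) ≤ Real.cosh s := by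
      rw [Real.cosh_le_cosh, abs_mul]
      nlinarith [abs_nonneg s]
    nlinarith [Real.cosh_pos (α * s), abs_nonneg α]
  have hsq : Real.sinh s ^ 2 ≤ (Real.cosh s + 1) * (Real.cosh s - c) := by
    rw [Real.sinh_sq]; nlinarith
  have he : Real.exp (-s) ≤ 1 := Real.exp_le_one_iff.2 (by linarith)
  have hees : Real.exp (-s) * (Real.cosh s + 1) ≤ 2 := by
    have hid : Real.exp s * Real.exp (-s) = 1 := by rw [← Real.exp_add]; simp
    have he0 := Real.exp_pos (-s)
    rw [Real.cosh_eq]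
    nlinarith
  have he0 := Real.exp_pos (-s)
  set D := Real.cosh s - c with hDdef
  set N := Real.exp (-s) - c
  set S := Real.sinh (α * s)
  set C := Real.cosh (α * s) * α
  set sh := Real.sinh s
  set ch := Real.cosh s
  set e := Real.exp (-s)
  rw [abs_div, abs_of_pos (by positivity : 0 < D ^ 2), div_mul_eq_mul_div,
    div_le_iff₀ (by positivity)]
  have t1 : |(-e * S + N * C) * D - N * S * sh| ≤ (e * |S| + |N| * |C|) * D + |N| * |S| * sh := by
    refine (abs_sub _ _).trans ?_
    rw [abs_mul, abs_mul (N * S), abs_mul N S, abs_of_pos hD, abs_of_pos hsh]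
    gcongr
    refine (abs_add_le _ _).trans (le_of_eq ?_)
    rw [abs_mul, abs_mul, abs_neg, abs_of_pos he0]
  have u1 : e * |S| * sh ≤ 2 * D := by
    calc e * |S| * sh ≤ e * sh * sh := by gcongr
      _ = e * sh ^ 2 := by ring
      _ ≤ e * ((ch + 1) * D) := by gcongr
      _ = e * (ch + 1) * D := by ring
      _ ≤ 2 * D := by gcongr
  have u2 : |N| * |C| * sh ≤ 4 * ch * D := by
    calc |N| * |C| * sh = (|N| * sh) * |C| := by ring
      _ ≤ (4 * D) * ch := by gcongr
      _ = _ := by ring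
  have u3 : |N| * |S| * sh * sh ≤ 8 * ch * D ^ 2 := by
    calc |N| * |S| * sh * sh = (|N| * sh) * (|S| * sh) := by ring
      _ ≤ (4 * D) * (sh * sh) := by gcongr
      _ = 4 * D * sh ^ 2 := by ring
      _ ≤ 4 * D * ((ch + 1) * D) := by gcongr
      _ ≤ _ := by nlinarith [mul_pos hD hD]
  calc _ ≤ ((e * |S| + |N| * |C|) * D + |N| * |S| * sh) * sh := by gcongr
    _ = (e * |S| * sh) * D + (|N| * |C| * sh) * D + |N| * |S| * sh * sh := by ring
    _ ≤ (2 * D) * D + (4 * ch * D) * D + 8 * ch * D ^ 2 := by gcongr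
    _ ≤ _ := by nlinarith [mul_pos hD hD]

section dist
variable {r₁ r₂ : ℝ}

lemma dS_arg_pos (h1 : 0 < r₁) (h2 : 0 < r₂) (s : ℝ) :
    0 < r₁ ^ 2 + r₂ ^ 2 + 2 * r₁ * r₂ * Real.cosh s := by
  have := Real.cosh_pos s
  positivity

lemma dS_sq (h1 : 0 < r₁) (h2 : 0 < r₂) (s : ℝ) :
    dS r₁ r₂ s ^ 2 = r₁ ^ 2 + r₂ ^ 2 + 2 * r₁ * r₂ * Real.cosh s :=
  Real.sq_sqrt (dS_arg_pos h1 h2 s).le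

lemma dS_ge (h1 : 0 < r₁) (h2 : 0 < r₂) (s : ℝ) : r₁ + r₂ ≤ dS r₁ r₂ s := by
  apply Real.le_sqrt_of_sq_le
  have := Real.one_le_cosh s
  nlinarith [mul_pos h1 h2]

lemma dS_deriv (h1 : 0 < r₁) (h2 : 0 < r₂) (s : ℝ) :
    HasDerivAt (dS r₁ r₂) (r₁ * r₂ * Real.sinh s / dS r₁ r₂ s) s := by
  have h := (((Real.hasDerivAt_cosh s).const_mul (2 * r₁ * r₂)).const_add
    (r₁ ^ 2 + r₂ ^ 2)).sqrt (dS_arg_pos h1 h2 s).ne'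
  refine HasDerivAt.congr_deriv (f := dS r₁ r₂) h ?_
  have : 0 < dS r₁ r₂ s := lt_of_lt_of_le (by linarith) (dS_ge h1 h2 s)
  change _ / (2 * dS r₁ r₂ s) = _
  field_simp

lemma dS_deriv_le (h1 : 0 < r₁) (h2 : 0 < r₂) (s : ℝ) (hs : 0 < s) :
    |r₁ * r₂ * Real.sinh s / dS r₁ r₂ s| ≤ dS r₁ r₂ s := by
  have h0 : 0 < dS r₁ r₂ s := lt_of_lt_of_le (by linarith) (dS_ge h1 h2 s)
  have hsh := Real.sinh_pos_iff.2 hs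
  rw [abs_of_nonneg (by positivity), div_le_iff₀ h0, ← sq, dS_sq h1 h2]
  have hp := mul_pos h1 h2
  nlinarith [Real.sinh_lt_cosh s, Real.cosh_pos s, sq_nonneg r₁, sq_nonneg r₂]

end dist

/-- The profile `x ↦ x (μ+x)^{-q} a(λx)`. -/
def prof (q mu lam : ℝ) (a : ℝ → ℂ) (x : ℝ) : ℂ :=
  ((x * (mu + x) ^ (-q) : ℝ) : ℂ) * a (lam * x)

lemma prof_deriv {q mu lam : ℝ} {a : ℝ → ℂ} (hmu : 0 < mu) (hlam : 0 < lam)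
    (ha : ∀ r > 0, DifferentiableAt ℝ a r) (x : ℝ) (hx : 0 < x) :
    HasDerivAt (prof q mu lam a)
      ((((mu + x) ^ (-q) + x * (-q * (mu + x) ^ (-q - 1)) : ℝ) : ℂ) * a (lam * x) +
        ((x * (mu + x) ^ (-q) : ℝ) : ℂ) * ((lam : ℂ) * deriv a (lam * x))) x := by
  have h1 : HasDerivAt (fun x : ℝ => (mu + x) ^ (-q)) (-q * (mu + x) ^ (-q - 1)) x :=
    (((hasDerivAt_id x).const_add mu).rpow_const (p := -q) (Or.inl (by simp; positivity))).congr_deriv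
      (by simp)
  have h2 : HasDerivAt (fun x : ℝ => x * (mu + x) ^ (-q))
      ((mu + x) ^ (-q) + x * (-q * (mu + x) ^ (-q - 1))) x :=
    ((hasDerivAt_id x).mul h1).congr_deriv (by simp)
  have h3 : HasDerivAt (fun x : ℝ => a (lam * x)) ((lam : ℂ) * deriv a (lam * x)) x := by
    have h4 := (ha (lam * x) (by positivity)).hasDerivAt.scomp x
      ((hasDerivAt_id x).const_mul lam)
    exact h4.congr_deriv (by simp)
  exact h2.ofReal_comp.mul h3

lemma prof_bounds {q M C1 : ℝ} {a : ℝ → ℂ} (hq : 1 ≤ q) (hM : 0 ≤ M) (hC1 : 0 ≤ C1)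
    (haM : ∀ r > 0, ‖a r‖ ≤ M) (haC : ∀ r > 0, ‖deriv a r‖ ≤ C1 / r)
    {mu lam : ℝ} (hmu : 0 < mu) (hlam : 0 < lam) (x : ℝ) (hx : 3 / 8 ≤ x) :
    ‖prof q mu lam a x‖ ≤ (3 / 8) ^ (1 - q) * ((1 + q) * M + C1) ∧
    ‖((((mu + x) ^ (-q) + x * (-q * (mu + x) ^ (-q - 1)) : ℝ) : ℂ) * a (lam * x) +
        ((x * (mu + x) ^ (-q) : ℝ) : ℂ) * ((lam : ℂ) * deriv a (lam * x)))‖ * x ≤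
      (3 / 8) ^ (1 - q) * ((1 + q) * M + C1) := by
  have hx0 : 0 < x := by linarith
  have hmx : 0 < mu + x := by linarith
  set P := (mu + x) ^ (-q) with hP
  have hP0 : 0 < P := by positivity
  have hxP : x * P ≤ (3 / 8) ^ (1 - q) := by
    calc x * P ≤ x * x ^ (-q) := by
          gcongr
          exact Real.rpow_le_rpow_of_nonpos hx0 (by linarith) (by linarith)
      _ = x ^ (1 - q) := by
          rw [sub_eq_add_neg, Real.rpow_add hx0, Real.rpow_one]
      _ ≤ _ := Real.rpow_le_rpow_of_nonpos (by norm_num) hx (by linarith)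
  have hlx : 0 < lam * x := by positivity
  have b1 := haM _ hlx
  have b2 := haC _ hlx
  constructor
  · rw [prof, norm_mul, Complex.norm_real, Real.norm_eq_abs, abs_of_pos (by positivity)]
    gcongr
    nlinarith
  · have hP1 : x * (q * (mu + x) ^ (-q - 1)) ≤ q * P := by
      rw [Real.rpow_sub_one hmx.ne', ← hP]
      have : x * (P / (mu + x)) ≤ P := by
        rw [mul_div_assoc', div_le_iff₀ hmx]
        nlinarith
      nlinarith
    have hP2 : 0 < (mu + x) ^ (-q - 1) := by positivity
    have n1 : |P + x * (-q * (mu + x) ^ (-q - 1))| ≤ (1 + q) * P := by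
      have : 0 < x * (q * (mu + x) ^ (-q - 1)) := by positivity
      rw [abs_le]; constructor <;> nlinarith
    have n2 : x * P * (lam * ‖deriv a (lam * x)‖) ≤ P * C1 := by
      calc x * P * (lam * ‖deriv a (lam * x)‖) ≤ x * P * (lam * (C1 / (lam * x))) := by gcongr
        _ = P * C1 := by field_simp
    calc _ ≤ ((1 + q) * P * M + P * C1) * x := by
          gcongr
          refine (norm_add_le _ _).trans ?_
          rw [norm_mul, norm_mul, norm_mul, Complex.norm_real, Complex.norm_real,
            Complex.norm_real, Real.norm_eq_abs, Real.norm_eq_abs, Real.norm_eq_abs,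
            abs_of_pos (by positivity : 0 < x * P), abs_of_pos hlam]
          gcongr
      _ = (x * P) * ((1 + q) * M + C1) := by ring
      _ ≤ _ := by gcongr

lemma symbol_props {a : ℝ → ℂ} (ha : IsSymbol0 a) :
    (∀ r > 0, DifferentiableAt ℝ a r) ∧ (∃ M : ℝ, 0 ≤ M ∧ ∀ r > 0, ‖a r‖ ≤ M) ∧
      ∃ C : ℝ, 0 ≤ C ∧ ∀ r > 0, ‖deriv a r‖ ≤ C / r := by
  obtain ⟨h1, ⟨M, hM⟩, h3⟩ := ha
  refine ⟨fun r hr => ?_, ⟨M, (norm_nonneg _).trans (hM 1 one_pos), hM⟩, ?_⟩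
  · exact (h1.differentiableOn (by simp)).differentiableAt (Ioi_mem_nhds hr)
  · obtain ⟨C, hC⟩ := h3 1
    have key : ∀ r > 0, ‖deriv a r‖ ≤ C / r := by
      intro r hr
      have := hC r hr
      rw [iteratedDerivWithin_one, derivWithin_of_isOpen isOpen_Ioi hr] at this
      simpa [Real.rpow_neg_one, div_eq_mul_inv] using this
    refine ⟨C, ?_, key⟩
    have := (norm_nonneg _).trans (key 1 one_pos)
    simpa using this

/-- The uniform estimate for a general amplitude factor. -/
lemma main_bound {δ : ℝ} (hδ : 0 ≤ δ) {a : ℝ → ℂ} {M C1 : ℝ}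
    (had : ∀ r > 0, DifferentiableAt ℝ a r) (hM : 0 ≤ M) (hC1 : 0 ≤ C1)
    (haM : ∀ r > 0, ‖a r‖ ≤ M) (haC : ∀ r > 0, ‖deriv a r‖ ≤ C1 / r)
    {A B κ : ℝ} (hA : A = (3 / 8) ^ (1 - (3 / 2 + δ)) * ((1 + (3 / 2 + δ)) * M + C1))
    (hB : 0 ≤ B) (hκ : 0 < κ) {g g' : ℝ → ℝ}
    (hg : ∀ s > 0, HasDerivAt g (g' s) s)
    (hgb : ∀ s > 0, |g s| ≤ B * Real.exp (-κ * s))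
    (hgb' : ∀ s > 0, |g' s| * Real.sinh s ≤ B * Real.cosh s)
    (j : ℕ) {r₁ r₂ : ℝ} (h1 : 0 < r₁) (h2 : 0 < r₂) (h12 : 3 / 8 ≤ r₁ + r₂) :
    ‖∫ s in Set.Ioi (0 : ℝ),
      Complex.exp (Complex.I * (((2 : ℝ) ^ (j : ℝ) * dS r₁ r₂ s : ℝ) : ℂ)) *
      (((((2 : ℝ) ^ (-(j : ℝ)) + dS r₁ r₂ s) ^ (-(3 / 2 + δ)) : ℝ) : ℂ) *
        a ((2 : ℝ) ^ (j : ℝ) * dS r₁ r₂ s) * (g s : ℂ))‖ ≤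
      (2 * (A * (8 / 3) * B / κ + (A * (8 / 3) * B + 4 * (A * B)))) *
        (1 + (2 : ℝ) ^ (j : ℝ) * r₁ * r₂) ^ (-(1 : ℝ) / 2) := by
  have hA0 : 0 ≤ A := by rw [hA]; positivity
  have hmu : (0 : ℝ) < (2 : ℝ) ^ (-(j : ℝ)) := by positivity
  have hlam : (0 : ℝ) < (2 : ℝ) ^ (j : ℝ) := by positivity
  have hd0 : ∀ s > 0, 3 / 8 ≤ dS r₁ r₂ s := fun s _ => h12.trans (dS_ge h1 h2 s)
  have hb := fun s (hs : s > 0) => prof_bounds (q := 3 / 2 + δ) (by linarith) hM hC1 haM haC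
    hmu hlam (dS r₁ r₂ s) (hd0 s hs)
  have hQ := fun s (hs : s > 0) => (prof_deriv (q := 3 / 2 + δ) hmu hlam had (dS r₁ r₂ s)
    (by have := hd0 s hs; linarith)).scomp s (dS_deriv h1 h2 s)
  have := osc (κ := κ) hA0 hB hκ hlam (mul_pos h1 h2) (fun s _ => dS_deriv h1 h2 s) hd0 hQ
    (fun s hs => by rw [hA]; exact (hb s hs).1)
    (fun s hs => by
      rw [hA]
      refine le_trans ?_ (hb s hs).2
      rw [norm_smul, mul_comm, Real.norm_eq_abs]
      gcongr
      exact dS_deriv_le h1 h2 s hs) hg hgb hgb'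
  rw [← mul_assoc ((2 : ℝ) ^ (j : ℝ)) r₁ r₂] at this
  refine le_trans (le_of_eq ?_) this
  congr 1
  refine setIntegral_congr_fun measurableSet_Ioi fun s hs => ?_
  have h4 : (dS r₁ r₂ s : ℂ) ≠ 0 := by
    have := hd0 s hs
    exact_mod_cast (by linarith : 0 < dS r₁ r₂ s).ne'
  simp only [Function.comp, prof]
  rw [Complex.ofReal_mul (dS r₁ r₂ s)]
  field_simp

theorem stmt8 (δ : ℝ) (hδ : 0 ≤ δ) (a : ℝ → ℂ) (ha : IsSymbol0 a)
    (β : ℝ → ℝ) (hβ : ContDiff ℝ (⊤ : ℕ∞) β)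
    (hβs : Function.support β ⊆ Set.Icc (3 / 8) (4 / 3))
    (α : ℝ) (hα : α ∈ Set.Ioo (-1 : ℝ) 1) (hα0 : α ≠ 0) :
    ∃ C : ℝ, ∀ (j : ℕ), 1 ≤ j → ∀ r₁ r₂ : ℝ, 0 < r₁ → 0 < r₂ →
      ∀ θ₁ ∈ Set.Ico (0 : ℝ) (2 * Real.pi), ∀ θ₂ ∈ Set.Ico (0 : ℝ) (2 * Real.pi),
        ‖Ktil1 δ α a β j r₁ r₂‖ + ‖Ktil2 δ α a β j r₁ r₂ (θ₁ - θ₂)‖ ≤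
          C * (2 : ℝ) ^ (-(j : ℝ) * (3 / 2 + δ)) *
            (1 + (2 : ℝ) ^ (j : ℝ) * r₁ * r₂) ^ (-(1 : ℝ) / 2) := by
  obtain ⟨had, ⟨M, hM, haM⟩, C1, hC1, haC⟩ := symbol_props ha
  have hα1 : |α| < 1 := abs_lt.2 ⟨hα.1, hα.2⟩
  have hαp : 0 < |α| := abs_pos.2 hα0
  obtain ⟨b, hb⟩ : ∃ b, ∀ x, ‖β x‖ ≤ b := by
    apply Continuous.bounded_above_of_compact_support hβ.continuous
    exact HasCompactSupport.intro isCompact_Icc (fun x hx => by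
      by_contra h
      exact hx (hβs h))
  have hb0 : 0 ≤ b := (norm_nonneg _).trans (hb 0)
  set A := (3 / 8 : ℝ) ^ (1 - (3 / 2 + δ)) * ((1 + (3 / 2 + δ)) * M + C1) with hA
  have hA0 : 0 ≤ A := by rw [hA]; positivity
  set K1 := 2 * (A * (8 / 3) * 1 / |α| + (A * (8 / 3) * 1 + 4 * (A * 1))) with hK1
  set K2 := 2 * (A * (8 / 3) * 14 / (1 - |α|) + (A * (8 / 3) * 14 + 4 * (A * 14))) with hK2
  have h1α : 0 < 1 - |α| := by linarith
  have hK1p : 0 ≤ K1 := by rw [hK1]; positivity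
  have hK2p : 0 ≤ K2 := by rw [hK2]; positivity
  refine ⟨b * (K1 + K2), fun j _ r₁ r₂ h1 h2 θ₁ _ θ₂ _ => ?_⟩
  by_cases hβ0 : β (r₁ + r₂) = 0
  · simp only [Ktil1, Ktil2, hβ0]
    simp only [Complex.ofReal_zero, mul_zero, zero_mul, norm_zero, add_zero]
    positivity
  have h12 : 3 / 8 ≤ r₁ + r₂ := (hβs hβ0).1
  have e1 := main_bound hδ had hM hC1 haM haC hA zero_le_one hαp
    (g := fun s => Real.exp (-(|α|) * s)) (g' := fun s => Real.exp (-(|α|) * s) * (-|α|))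
    (fun s _ => (((hasDerivAt_id s).const_mul (-|α|)).exp).congr_deriv (by simp))
    (fun s _ => by simp)
    (fun s hs => by
      have hsh := Real.sinh_pos_iff.2 hs
      have hlt := Real.sinh_lt_cosh s
      have : Real.exp (-|α| * s) ≤ 1 := Real.exp_le_one_iff.2 (by nlinarith)
      rw [abs_mul, abs_neg, abs_abs, abs_of_pos (Real.exp_pos _)]
      have h3 : Real.exp (-|α| * s) * |α| ≤ 1 := by
        nlinarith [Real.exp_pos (-|α| * s)]
      nlinarith) j h1 h2 h12
  have e2 := main_bound hδ had hM hC1 haM haC hA (by norm_num : (0 : ℝ) ≤ 14) h1α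
    (fun s hs => gtwo_deriv α (Real.cos (θ₁ - θ₂ + Real.pi)) s (Real.cos_le_one _) hs)
    (fun s hs => gtwo_bound α _ s hα1 (Real.neg_one_le_cos _) (Real.cos_le_one _) hs)
    (fun s hs => gtwo_deriv_bound α _ s hα1 (Real.neg_one_le_cos _) (Real.cos_le_one _) hs)
    j h1 h2 h12
  rw [← hK1] at e1
  rw [← hK2] at e2
  have hw : (0 : ℝ) < (2 : ℝ) ^ (-(j : ℝ) * (3 / 2 + δ)) := by positivity
  have hbj := hb (r₁ + r₂)
  set R := (1 + (2 : ℝ) ^ (j : ℝ) * r₁ * r₂) ^ (-(1 : ℝ) / 2) with hR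
  have hR0 : 0 ≤ R := by positivity
  have f1 : ‖Ktil1 δ α a β j r₁ r₂‖ ≤ (2 : ℝ) ^ (-(j : ℝ) * (3 / 2 + δ)) * b * (K1 * R) := by
    rw [Ktil1, norm_mul, norm_mul, Complex.norm_real, Complex.norm_real,
      Real.norm_of_nonneg hw.le]
    gcongr
    exact e1
  have f2 : ‖Ktil2 δ α a β j r₁ r₂ (θ₁ - θ₂)‖ ≤
      (2 : ℝ) ^ (-(j : ℝ) * (3 / 2 + δ)) * b * (K2 * R) := by
    rw [Ktil2, norm_mul, norm_mul, Complex.norm_real, Complex.norm_real,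
      Real.norm_of_nonneg hw.le]
    gcongr
    exact e2
  refine (add_le_add f1 f2).trans (le_of_eq ?_)
  ring

end
end
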